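/- Let M_n be the random symmetric matrix model with α-balanced entries. There exist constants c > 0, K > 0 and p₀ such that for every n and every prime p with p₀ ≤ p ≤ exp(n^c), the total variation distance between the distribution of the corank n − rank(M_n/p) and the distribution μ_sym on ℕ satisfies d_TV(n − rank(M_n/p), μ_sym) ≤ K exp(−n^c), where μ_sym(k) = (∏_{i=0}^∞ (1 − p^{−2i−1})) / (∏_{i=1}^k (p^i − 1)). -/

import Mathlib

/-!
The proof is by the moment method, with the moments `E[e_k(corank)]`, where
`e_k(r) = ∏_{i < k} (p^r - p^i)` counts linearly independent `k`-tuples in an `r`-dimensional space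
(`ek`), for `k` as large as a small power of `n`.

*Moments as Fourier sums.* `E[e_k(corank)]` is the expected number of linearly independent
`k`-tuples `W` in `𝔽_p^n` killed by the random matrix. Expanding the event in additive characters
introduces a dual `k`-tuple `Y`; grouping `(W, Y)` by coordinates gives `u : Fin n → V` with
`V = 𝔽_p^k × 𝔽_p^k` carrying the hyperbolic form `B`, and independence of the entries bounds the
summand by `∏_{i < j} |φ(B(u_i, u_j))|`, with `φ` the characteristic function of an entry
modulo `p` (`wt`). Isotropic tuples (`B(u_i, u_j) = 0` for all `i, j`) have summand exactly `1`, and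
each independent `W` has `p^{k(k-1)/2}` isotropic partners `Y`, one for each antisymmetric matrix
(`card_isotropic`). They produce the main term `p^{k(k-1)/2}` (`moment_error`).

*Non-isotropic tuples.* Let `1 - |φ(t)|²` be the defect of `t`. A tuple of large total defect has
exponentially small weight. If the total defect is small, a greedy choice finds a short list `L` such
that all but few `u_i` lie in a set `Aset L` determined by `L` (`few_Aset`). Elements of `Aset L` are
almost orthogonal to most of a set containing `Aset L`, so a spectral bound keeps the sumsets of
`Aset L` of size `O(p^k)`; if `Aset L` has more than `p^k / 2` elements, some iterated sumset then has
doubling below `3/2`, and `Aset L` spans a subspace `H` of dimension at most `k`. Either `u` is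
isotropic, or it mostly lies in one of few sets with at most `p^k / 2` elements, or it mostly lies in
such an `H` and some `u_i` pairs nontrivially with `H`, so that `φ(B(u_i, ·))` has mean at most
`√(1 - α)` on `H` (`structure_lemma`). Each of the last possibilities gains an exponential factor in
`n` over the count `p^{kn}` of the tuples in a `k`-dimensional space (`error_bound`).

*Inversion.* The law `muSym` has exactly the moments `p^{k(k-1)/2}`: the case `k = 0` is an identity
of Euler for infinite products (`tsum_nu`), the rest a recursion (`hasSum_muSym`). Testing the
difference of the two laws against the products `∏_{j ≤ K, j ≠ r} (p^X - p^j)` isolates the mass at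
`r`, and moments up to order `K + 1` control the `ℓ¹` distance (`l1_bound`). With `x = n^{1/100}` and
`K = ⌈x²⌉` all the errors are `O(exp(-x))` (`main_bound`).
-/

open MeasureTheory Filter

noncomputable section

def IsBalanced (α : ℝ) (μ : Measure ℤ) : Prop :=
  ∀ p : ℕ, p.Prime → ∀ r : ZMod p, μ {x : ℤ | (x : ZMod p) = r} ≤ ENNReal.ofReal (1 - α)

def symMatrix (n : ℕ) (x : Fin n × Fin n → ℤ) : Matrix (Fin n) (Fin n) ℤ :=
  Matrix.of fun i j => if i ≤ j then x (i, j) else x (j, i)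

def matMeasure (μ : Measure ℤ) (hμ : IsProbabilityMeasure μ) (n : ℕ) :
    Measure (Fin n × Fin n → ℤ) :=
  haveI := hμ
  Measure.pi fun _ => μ

/-- The limiting corank distribution for random symmetric matrices mod `p`. -/
def muSym (p k : ℕ) : ℝ :=
  (∏' i : ℕ, (1 - (p : ℝ) ^ (-(2 * (i : ℤ) + 1)))) /
    (∏ i ∈ Finset.Icc 1 k, ((p : ℝ) ^ i - 1))

set_option linter.unusedSectionVars false

namespace SymCorank

/-! ### Characteristic functions modulo `p` -/

/-- The characteristic function of a weight `f` on `ZMod p`. -/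
def chr {p : ℕ} [NeZero p] (f : ZMod p → ℝ) (t : ZMod p) : ℂ :=
  ∑ a, (f a : ℂ) * ZMod.stdAddChar (t * a)

/-- The defect `1 - |φ(t)|²` of the characteristic function. -/
def dfc {p : ℕ} [NeZero p] (f : ZMod p → ℝ) (t : ZMod p) : ℝ :=
  1 - ‖chr f t‖ ^ 2

section CharFun
variable {p : ℕ} [NeZero p]

lemma norm_std (a : ZMod p) : ‖(ZMod.stdAddChar a : ℂ)‖ = 1 := by
  exact Circle.norm_coe _

lemma conj_std (a : ZMod p) :
    (starRingEnd ℂ) (ZMod.stdAddChar a : ℂ) = ZMod.stdAddChar (-a) := by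
  rw [AddChar.map_neg_eq_inv, Complex.inv_def, Complex.normSq_eq_norm_sq, norm_std]
  simp

lemma norm_chr_sq (f : ZMod p → ℝ) (t : ZMod p) :
    ((‖chr f t‖ ^ 2 : ℝ) : ℂ) =
      ∑ a, ∑ b, ((f a * f b : ℝ) : ℂ) * ZMod.stdAddChar (t * (a - b)) := by
  rw [← Complex.normSq_eq_norm_sq, ← Complex.mul_conj, chr, map_sum, Finset.sum_mul_sum]
  refine Finset.sum_congr rfl fun a _ => Finset.sum_congr rfl fun b _ => ?_
  rw [map_mul (starRingEnd ℂ), conj_std, Complex.conj_ofReal, mul_sub, sub_eq_add_neg, AddChar.map_add_eq_mul]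
  push_cast
  ring

lemma re_std (a : ZMod p) :
    (ZMod.stdAddChar a : ℂ).re = 1 - ‖1 - (ZMod.stdAddChar a : ℂ)‖ ^ 2 / 2 := by
  have h := norm_std a
  have h2 : ‖(ZMod.stdAddChar a : ℂ)‖ ^ 2 = 1 := by rw [h]; norm_num
  rw [← Complex.normSq_eq_norm_sq, Complex.normSq_apply] at h2
  rw [← Complex.normSq_eq_norm_sq, Complex.normSq_apply]
  simp
  nlinarith

variable {f : ZMod p → ℝ}

lemma dfc_eq (h1 : ∑ a, f a = 1) (t : ZMod p) :
    dfc f t = ∑ a, ∑ b, f a * f b *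
      (‖1 - (ZMod.stdAddChar (t * (a - b)) : ℂ)‖ ^ 2 / 2) := by
  have h := congrArg Complex.re (norm_chr_sq f t)
  rw [Complex.ofReal_re, Complex.re_sum] at h
  have h11 : ∑ a, ∑ b, f a * f b = 1 := by
    rw [← Finset.sum_mul_sum, h1, one_mul]
  rw [dfc, h, ← h11, ← Finset.sum_sub_distrib]
  refine Finset.sum_congr rfl fun a _ => ?_
  rw [Complex.re_sum, ← Finset.sum_sub_distrib]
  refine Finset.sum_congr rfl fun b _ => ?_
  rw [Complex.re_ofReal_mul, re_std]
  ring

lemma norm_chr_sq_eq (f : ZMod p → ℝ) (t : ZMod p) : ‖chr f t‖ ^ 2 = 1 - dfc f t := by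
  simp [dfc]

lemma dfc_nonneg (h0 : ∀ a, 0 ≤ f a) (h1 : ∑ a, f a = 1) (t : ZMod p) : 0 ≤ dfc f t := by
  rw [dfc_eq h1]
  exact Finset.sum_nonneg fun a _ => Finset.sum_nonneg fun b _ =>
    mul_nonneg (mul_nonneg (h0 a) (h0 b)) (by positivity)

lemma norm_chr_le_one (h0 : ∀ a, 0 ≤ f a) (h1 : ∑ a, f a = 1) (t : ZMod p) :
    ‖chr f t‖ ≤ 1 := by
  have := dfc_nonneg h0 h1 t
  have h2 := norm_chr_sq_eq f t
  nlinarith [norm_nonneg (chr f t)]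

lemma dfc_le_one (f : ZMod p → ℝ) (t : ZMod p) : dfc f t ≤ 1 := by
  have := sq_nonneg ‖chr f t‖
  simp only [dfc]; linarith

lemma norm_chr_le_exp (t : ZMod p) :
    ‖chr f t‖ ≤ Real.exp (-(dfc f t) / 2) := by
  have h2 := norm_chr_sq_eq f t
  have h3 := Real.add_one_le_exp (-(dfc f t))
  have h4 : Real.exp (-(dfc f t)) = Real.exp (-(dfc f t) / 2) ^ 2 := by
    rw [← Real.exp_nat_mul]; congr 1; push_cast; ring
  exact le_of_sq_le_sq (by linarith) (Real.exp_pos _).le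

lemma chr_zero (h1 : ∑ a, f a = 1) : chr f 0 = 1 := by
  simp only [chr, zero_mul, AddChar.map_zero_eq_one, mul_one]
  rw [← Complex.ofReal_sum, h1, Complex.ofReal_one]

lemma dfc_zero (h1 : ∑ a, f a = 1) : dfc f 0 = 0 := by
  simp [dfc, chr_zero h1]

lemma dfc_neg (h1 : ∑ a, f a = 1) (t : ZMod p) : dfc f (-t) = dfc f t := by
  rw [dfc_eq h1, dfc_eq h1, Finset.sum_comm]
  refine Finset.sum_congr rfl fun a _ => Finset.sum_congr rfl fun b _ => ?_
  rw [show -t * (b - a) = t * (a - b) by ring, mul_comm (f b)]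

/-- The defect is, up to the factor `2`, subadditive: it is an average of squared norms. -/
lemma dfc_add (h0 : ∀ a, 0 ≤ f a) (h1 : ∑ a, f a = 1) (s t : ZMod p) :
    dfc f (s + t) ≤ 2 * dfc f s + 2 * dfc f t := by
  rw [dfc_eq h1, dfc_eq h1, dfc_eq h1, Finset.mul_sum, Finset.mul_sum, ← Finset.sum_add_distrib]
  refine Finset.sum_le_sum fun a _ => ?_
  rw [Finset.mul_sum, Finset.mul_sum, ← Finset.sum_add_distrib]
  refine Finset.sum_le_sum fun b _ => ?_
  rw [add_mul, AddChar.map_add_eq_mul]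
  set x : ℂ := ZMod.stdAddChar (s * (a - b)) with hx
  set y : ℂ := ZMod.stdAddChar (t * (a - b)) with hy
  have hxn : ‖x‖ = 1 := norm_std _
  have h : ‖1 - x * y‖ ≤ ‖1 - x‖ + ‖1 - y‖ := by
    calc ‖1 - x * y‖ = ‖(1 - x) + x * (1 - y)‖ := by congr 1; ring
      _ ≤ ‖1 - x‖ + ‖x * (1 - y)‖ := norm_add_le _ _
      _ = _ := by rw [norm_mul, hxn, one_mul]
  have h2 : ‖1 - x * y‖ ^ 2 ≤ 2 * ‖1 - x‖ ^ 2 + 2 * ‖1 - y‖ ^ 2 := by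
    nlinarith [norm_nonneg (1 - x * y), sq_nonneg (‖1 - x‖ - ‖1 - y‖)]
  have h3 := mul_nonneg (h0 a) (h0 b)
  nlinarith

end CharFun

section Prime
variable {p : ℕ} [Fact p.Prime] {f : ZMod p → ℝ} {α : ℝ}

lemma sum_std_mul (c : ZMod p) :
    ∑ t : ZMod p, (ZMod.stdAddChar (t * c) : ℂ) = if c = 0 then (p : ℂ) else 0 := by
  have := AddChar.sum_mulShift c (ZMod.isPrimitive_stdAddChar p)
  rw [this, ZMod.card]
  split_ifs <;> simp

lemma sum_sq_le (h0 : ∀ a, 0 ≤ f a) (h1 : ∑ a, f a = 1) (hα : ∀ a, f a ≤ 1 - α) :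
    ∑ a, f a * f a ≤ 1 - α := by
  calc ∑ a, f a * f a ≤ ∑ a, (1 - α) * f a :=
        Finset.sum_le_sum fun a _ => mul_le_mul_of_nonneg_right (hα a) (h0 a)
    _ = 1 - α := by rw [← Finset.mul_sum, h1, mul_one]

/-- Parseval: the collision probability of an `α`-balanced law is at most `1 - α`. -/
lemma sum_norm_chr_sq (h0 : ∀ a, 0 ≤ f a) (h1 : ∑ a, f a = 1) (hα : ∀ a, f a ≤ 1 - α) :
    ∑ t, ‖chr f t‖ ^ 2 ≤ (1 - α) * p := by
  have h : ((∑ t, ‖chr f t‖ ^ 2 : ℝ) : ℂ) = ((p * ∑ a, f a * f a : ℝ) : ℂ) := by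
    push_cast
    have : ∀ t, ((‖chr f t‖ : ℂ)) ^ 2 = ((‖chr f t‖ ^ 2 : ℝ) : ℂ) := by intro t; push_cast; rfl
    simp_rw [this, norm_chr_sq]
    rw [Finset.sum_comm, Finset.mul_sum]
    refine Finset.sum_congr rfl fun a _ => ?_
    rw [Finset.sum_comm]
    simp_rw [← Finset.mul_sum, sum_std_mul, sub_eq_zero]
    simp
    ring
  have h' := Complex.ofReal_injective h
  rw [h', mul_comm]
  exact mul_le_mul_of_nonneg_right (sum_sq_le h0 h1 hα) (Nat.cast_nonneg _)

lemma sum_norm_chr (h0 : ∀ a, 0 ≤ f a) (h1 : ∑ a, f a = 1) (hα : ∀ a, f a ≤ 1 - α)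
    (hα1 : α ≤ 1) :
    ∑ t, ‖chr f t‖ ≤ Real.sqrt (1 - α) * p := by
  have h := sq_sum_le_card_mul_sum_sq (s := (Finset.univ : Finset (ZMod p)))
    (f := fun t => ‖chr f t‖)
  rw [Finset.card_univ, ZMod.card] at h
  have h2 := sum_norm_chr_sq h0 h1 hα
  refine le_of_sq_le_sq ?_ (by positivity)
  rw [mul_pow, Real.sq_sqrt (by linarith)]
  nlinarith [Nat.cast_nonneg (α := ℝ) p]

end Prime

/-! ### Equidistribution and the spectral bound -/

section Spectral
variable {p : ℕ} [Fact p.Prime] {f : ZMod p → ℝ} {α : ℝ}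
variable {V : Type*} [AddCommGroup V] [Module (ZMod p) V] [Fintype V]

open scoped Classical in
/-- A linear functional that does not vanish on `H` is equidistributed on `H`. -/
lemma sum_fiber {R : Type*} [CommRing R] (H : Submodule (ZMod p) V) (l : V →ₗ[ZMod p] ZMod p)
    {h : V} (hH : h ∈ H) (hl : l h ≠ 0) (g : ZMod p → R) :
    (p : R) * ∑ v : H, g (l v) = (Fintype.card H : R) * ∑ t, g t := by
  have key : ∀ t : ZMod p, ∑ v : H, g (l v) = ∑ v : H, g (l v + t) := by
    intro t
    let h' : H := ⟨(t * (l h)⁻¹) • h, H.smul_mem _ hH⟩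
    rw [← Equiv.sum_comp (Equiv.addRight h')]
    refine Finset.sum_congr rfl fun v _ => ?_
    congr 1
    simp [h', mul_assoc, inv_mul_cancel₀ hl]
  calc (p : R) * ∑ v : H, g (l v) = ∑ t : ZMod p, ∑ v : H, g (l v) := by
        simp [ZMod.card]
    _ = ∑ t : ZMod p, ∑ v : H, g (l v + t) := Finset.sum_congr rfl fun t _ => key t
    _ = ∑ v : H, ∑ t : ZMod p, g (l v + t) := Finset.sum_comm
    _ = ∑ v : H, ∑ t : ZMod p, g t := by
        refine Finset.sum_congr rfl fun v _ => ?_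
        exact Equiv.sum_comp (Equiv.addLeft (l v)) g
    _ = _ := by simp

open scoped Classical in
/-- If the functional `l` does not vanish on `H`, then `|φ(l v)|` has mean at most `√(1 - α)` over
`v ∈ H`. -/
lemma sum_norm_chr_fiber (h0 : ∀ a, 0 ≤ f a) (h1 : ∑ a, f a = 1) (hα : ∀ a, f a ≤ 1 - α)
    (hα1 : α ≤ 1) (H : Submodule (ZMod p) V) (l : V →ₗ[ZMod p] ZMod p)
    {h : V} (hH : h ∈ H) (hl : l h ≠ 0) :
    ∑ v : H, ‖chr f (l v)‖ ≤ Real.sqrt (1 - α) * Fintype.card H := by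
  have hf := sum_fiber H l hH hl (fun t => ‖chr f t‖)
  have hs := sum_norm_chr h0 h1 hα hα1
  have hp : (0 : ℝ) < p := by exact_mod_cast (Fact.out : p.Prime).pos
  have hc : (0 : ℝ) ≤ Fintype.card H := Nat.cast_nonneg _
  have := mul_le_mul_of_nonneg_left hs hc
  rw [← hf] at this
  refine le_of_mul_le_mul_left (this.trans_eq ?_) hp
  ring

open scoped Classical in
lemma sum_std_form {B : LinearMap.BilinForm (ZMod p) V} (hn : B.Nondegenerate)
    {c : ZMod p} (hc : c ≠ 0) (y : V) :
    ∑ x : V, (ZMod.stdAddChar (B x y * c) : ℂ) = if y = 0 then (Fintype.card V : ℂ) else 0 := by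
  split_ifs with hy
  · simp [hy, Finset.card_univ]
  · have : ∃ x, B x y ≠ 0 := by
      by_contra hcon
      push Not at hcon
      exact hy (hn.2 y hcon)
    obtain ⟨x, hx⟩ := this
    have hf := sum_fiber (⊤ : Submodule (ZMod p) V) (B.flip y) (h := x) trivial
      (by simpa using hx) (fun t => (ZMod.stdAddChar (t * c) : ℂ))
    rw [sum_std_mul, if_neg hc, mul_zero] at hf
    have hp : (p : ℂ) ≠ 0 := by exact_mod_cast (Fact.out : p.Prime).ne_zero
    have h2 := (mul_eq_zero.mp hf).resolve_left hp
    rw [← h2]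
    exact (Equiv.sum_comp (Submodule.topEquiv (R := ZMod p) (M := V)).toEquiv
      (fun x => (ZMod.stdAddChar (B x y * c) : ℂ))).symm

open scoped Classical in
/-- The matrix `(ψ(c B(x, y)))_{x, y}` is `√|V|` times a unitary one, hence bounds bilinear sums over
indicators. -/
lemma spectral_char {B : LinearMap.BilinForm (ZMod p) V} (hn : B.Nondegenerate)
    {c : ZMod p} (hc : c ≠ 0) (X Y : Finset V) :
    ‖∑ x ∈ X, ∑ y ∈ Y, (ZMod.stdAddChar (B x y * c) : ℂ)‖ ≤
      Real.sqrt (X.card * Y.card * Fintype.card V) := by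
  set g : V → ℂ := fun x => ∑ y ∈ Y, (ZMod.stdAddChar (B x y * c) : ℂ) with hg
  have hsq : ∀ x, ((‖g x‖ ^ 2 : ℝ) : ℂ) =
      ∑ y ∈ Y, ∑ z ∈ Y, (ZMod.stdAddChar (B x (y - z) * c) : ℂ) := by
    intro x
    rw [← Complex.normSq_eq_norm_sq, ← Complex.mul_conj, hg, map_sum, Finset.sum_mul_sum]
    refine Finset.sum_congr rfl fun a _ => Finset.sum_congr rfl fun b _ => ?_
    rw [conj_std, ← AddChar.map_add_eq_mul, map_sub]
    congr 1; ring
  have htot : ∑ x, ‖g x‖ ^ 2 = Y.card * Fintype.card V := by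
    have : ((∑ x, ‖g x‖ ^ 2 : ℝ) : ℂ) = ((Y.card * Fintype.card V : ℝ) : ℂ) := by
      rw [Complex.ofReal_sum]
      simp_rw [hsq]
      rw [Finset.sum_comm]
      have : ∀ y ∈ Y, ∑ x : V, ∑ z ∈ Y, (ZMod.stdAddChar (B x (y - z) * c) : ℂ)
          = Fintype.card V := by
        intro y hy
        rw [Finset.sum_comm]
        simp_rw [sum_std_form hn hc, sub_eq_zero]
        rw [Finset.sum_ite_eq, if_pos hy]
      rw [Finset.sum_congr rfl this]
      simp
    exact Complex.ofReal_injective this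
  refine Real.le_sqrt_of_sq_le ?_
  calc ‖∑ x ∈ X, g x‖ ^ 2 ≤ (∑ x ∈ X, ‖g x‖) ^ 2 := by
        gcongr; exact norm_sum_le _ _
    _ ≤ X.card * ∑ x ∈ X, ‖g x‖ ^ 2 := sq_sum_le_card_mul_sum_sq
    _ ≤ X.card * ∑ x, ‖g x‖ ^ 2 := by
        gcongr
        exact Finset.subset_univ _
    _ = _ := by rw [htot]; ring

open scoped Classical in
/-- Spectral bound: the characteristic function cannot be close to `1` in modulus on a product
`X × Y` with `|X| |Y|` much larger than `|V|`. -/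
lemma spectral_chr {B : LinearMap.BilinForm (ZMod p) V} (hn : B.Nondegenerate)
    (h0 : ∀ a, 0 ≤ f a) (h1 : ∑ a, f a = 1) (hα : ∀ a, f a ≤ 1 - α) (X Y : Finset V) :
    ∑ x ∈ X, ∑ y ∈ Y, ‖chr f (B x y)‖ ^ 2 ≤
      (1 - α) * (X.card * Y.card) + Real.sqrt (X.card * Y.card * Fintype.card V) := by
  set S := Real.sqrt (X.card * Y.card * Fintype.card V) with hS
  have hS0 : 0 ≤ S := Real.sqrt_nonneg _
  have hc : ((∑ x ∈ X, ∑ y ∈ Y, ‖chr f (B x y)‖ ^ 2 : ℝ) : ℂ) =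
      ∑ a, ∑ b, ((f a * f b : ℝ) : ℂ) *
        ∑ x ∈ X, ∑ y ∈ Y, (ZMod.stdAddChar (B x y * (a - b)) : ℂ) := by
    rw [Complex.ofReal_sum]
    simp_rw [Complex.ofReal_sum, norm_chr_sq, Finset.mul_sum]
    calc ∑ x ∈ X, ∑ y ∈ Y, ∑ a, ∑ b, ((f a * f b : ℝ) : ℂ) * (ZMod.stdAddChar (B x y * (a - b)) : ℂ)
        = ∑ x ∈ X, ∑ a, ∑ y ∈ Y, ∑ b, ((f a * f b : ℝ) : ℂ) * (ZMod.stdAddChar (B x y * (a - b)) : ℂ) :=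
          Finset.sum_congr rfl fun x _ => Finset.sum_comm
      _ = ∑ x ∈ X, ∑ a, ∑ b, ∑ y ∈ Y, ((f a * f b : ℝ) : ℂ) * (ZMod.stdAddChar (B x y * (a - b)) : ℂ) :=
          Finset.sum_congr rfl fun x _ => Finset.sum_congr rfl fun a _ => Finset.sum_comm
      _ = ∑ a, ∑ x ∈ X, ∑ b, ∑ y ∈ Y, ((f a * f b : ℝ) : ℂ) * (ZMod.stdAddChar (B x y * (a - b)) : ℂ) :=
          Finset.sum_comm
      _ = _ := Finset.sum_congr rfl fun a _ => Finset.sum_comm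
  have hnn : 0 ≤ ∑ x ∈ X, ∑ y ∈ Y, ‖chr f (B x y)‖ ^ 2 := by positivity
  rw [← abs_of_nonneg hnn, ← Real.norm_eq_abs, ← Complex.norm_real, hc]
  have hterm : ∀ a b : ZMod p, ‖((f a * f b : ℝ) : ℂ) *
      ∑ x ∈ X, ∑ y ∈ Y, (ZMod.stdAddChar (B x y * (a - b)) : ℂ)‖ ≤
      (if a = b then f a * f a * (X.card * Y.card) else 0) + f a * f b * S := by
    intro a b
    have hab := mul_nonneg (h0 a) (h0 b)
    rw [norm_mul, Complex.norm_real, Real.norm_of_nonneg hab]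
    split_ifs with h
    · subst h
      have : ‖∑ x ∈ X, ∑ y ∈ Y, (ZMod.stdAddChar (B x y * (a - a)) : ℂ)‖ ≤ X.card * Y.card := by
        simp
      have := mul_le_mul_of_nonneg_left this hab
      have := mul_nonneg hab hS0
      linarith
    · rw [zero_add]
      exact mul_le_mul_of_nonneg_left (spectral_char hn (sub_ne_zero.mpr h) X Y) hab
  calc _ ≤ ∑ a, ∑ b, ((if a = b then f a * f a * (X.card * Y.card) else 0) + f a * f b * S) :=
        (norm_sum_le _ _).trans (Finset.sum_le_sum fun a _ =>
          (norm_sum_le _ _).trans (Finset.sum_le_sum fun b _ => hterm a b))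
    _ = (∑ a, f a * f a) * (X.card * Y.card) + S := by
        simp_rw [Finset.sum_add_distrib, ← Finset.sum_mul]
        rw [← Finset.sum_mul_sum, h1]
        simp [Finset.sum_mul]
    _ ≤ _ := by
        gcongr
        exact sum_sq_le h0 h1 hα

end Spectral

/-! ### Small doubling and approximate orthogonality -/

section Doubling
open scoped Pointwise
variable {V : Type*} [AddCommGroup V] [DecidableEq V]

/-- The `3/2` theorem of Freiman, for a set containing `0`. -/
lemma small_doubling {A : Finset V} (h0 : (0 : V) ∈ A)
    (h : ((A + A).card : ℝ) < 3 / 2 * A.card) :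
    ∃ H : AddSubgroup V, (∀ a ∈ A, a ∈ H) ∧ (Nat.card H : ℝ) ≤ 3 / 2 * A.card := by
  let A' : Finset (Multiplicative V) := A
  have h' : ((A' * A').card : ℚ) < (3 / 2 : ℚ) * A'.card := by
    have h2 : 2 * (A + A).card < 3 * A.card := by
      have : (2 : ℝ) * (A + A).card < 3 * A.card := by linarith
      exact_mod_cast this
    have h3 : (2 : ℚ) * (A + A).card < 3 * A.card := by exact_mod_cast h2
    have h4 : ((A + A).card : ℚ) < (3 / 2 : ℚ) * A.card := by linarith
    exact h4
  obtain ⟨H, _, hcard, hsub⟩ := Finset.doubling_lt_three_halves h'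
  refine ⟨Subgroup.toAddSubgroup' H, fun a ha => ?_, ?_⟩
  · have h1 := (hsub (Multiplicative.ofAdd 0) h0).1 (show Multiplicative.ofAdd a ∈ (A' : Set _) from ha)
    rw [ofAdd_zero, one_smul] at h1
    exact h1
  · have h3 : 2 * Fintype.card H < 3 * A'.card := by
      have : (2 : ℚ) * Fintype.card H < 3 * A'.card := by linarith
      exact_mod_cast this
    have h4 : (2 : ℝ) * Fintype.card H < 3 * A'.card := by exact_mod_cast h3
    have h2 : (Fintype.card H : ℝ) < 3 / 2 * A'.card := by linarith
    rw [← Nat.card_eq_fintype_card] at h2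
    exact h2.le

/-- The iterated sumset `2^t A`. -/
def dbl (A : Finset V) : ℕ → Finset V
  | 0 => A
  | t + 1 => dbl A t + dbl A t

lemma subset_dbl {A : Finset V} (h0 : (0 : V) ∈ A) (t : ℕ) : A ⊆ dbl A t := by
  induction t with
  | zero => exact subset_rfl
  | succ t ih =>
    intro a ha
    simpa [dbl] using Finset.add_mem_add (ih ha) (ih h0)

/-- A set whose iterated sumsets stay small generates a small subgroup. -/
lemma exists_subgroup {A : Finset V} (h0 : (0 : V) ∈ A) {M : ℝ} {t₀ : ℕ}
    (hM : ∀ t ≤ t₀, ((dbl A t).card : ℝ) ≤ M) (hbig : M < (3 / 2) ^ t₀ * A.card) :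
    ∃ H : AddSubgroup V, (∀ a ∈ A, a ∈ H) ∧ (Nat.card H : ℝ) ≤ 3 / 2 * M := by
  by_cases hex : ∃ t < t₀, ((dbl A (t + 1)).card : ℝ) < 3 / 2 * (dbl A t).card
  · obtain ⟨t, ht, hlt⟩ := hex
    obtain ⟨H, hH, hc⟩ := small_doubling (subset_dbl h0 t h0) hlt
    exact ⟨H, fun a ha => hH a (subset_dbl h0 t ha), hc.trans (by gcongr; exact hM t ht.le)⟩
  · push Not at hex
    have : ∀ t ≤ t₀, (3 / 2 : ℝ) ^ t * A.card ≤ (dbl A t).card := by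
      intro t
      induction t with
      | zero => intro _; simp [dbl]
      | succ t ih =>
        intro ht
        have := hex t ht
        have := ih (by omega)
        rw [pow_succ]
        linarith
    linarith [this t₀ le_rfl, hM t₀ le_rfl]

end Doubling

section Structure
variable {p : ℕ} [Fact p.Prime] {f : ZMod p → ℝ} {α : ℝ}
variable {V : Type*} [AddCommGroup V] [Module (ZMod p) V] [Fintype V]
variable {B : LinearMap.BilinForm (ZMod p) V}

open scoped Classical in
/-- Vectors whose pairing with every element of `L` has small defect. -/
def Uset (f : ZMod p → ℝ) (B : LinearMap.BilinForm (ZMod p) V) (ε : ℝ) (L : Finset V) :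
    Finset V :=
  Finset.univ.filter fun v => ∀ x ∈ L, dfc f (B v x) ≤ ε

open scoped Classical in
/-- Vectors whose pairing with all but a proportion `δ` of the elements of `U` has small defect. -/
def Wset (f : ZMod p → ℝ) (B : LinearMap.BilinForm (ZMod p) V) (ε δ : ℝ) (U : Finset V) :
    Finset V :=
  Finset.univ.filter fun x =>
    ((U.filter fun v => ε < dfc f (B v x)).card : ℝ) ≤ δ * U.card

open scoped Classical in
/-- The vectors of `U = Uset L` that are themselves almost orthogonal to most of `U`. When it is
large, this set behaves like a subgroup. -/
def Aset (f : ZMod p → ℝ) (B : LinearMap.BilinForm (ZMod p) V) (ε δ : ℝ) (L : Finset V) :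
    Finset V :=
  Uset f B ε L ∩ Wset f B ε δ (Uset f B ε L)

lemma zero_mem_Uset (h1 : ∑ a, f a = 1) {ε : ℝ} (hε : 0 ≤ ε) (L : Finset V) :
    (0 : V) ∈ Uset f B ε L := by
  simp [Uset, dfc_zero h1, hε]

lemma zero_mem_Aset (h1 : ∑ a, f a = 1) {ε δ : ℝ} (hε : 0 ≤ ε) (hδ : 0 ≤ δ) (L : Finset V) :
    (0 : V) ∈ Aset f B ε δ L := by
  classical
  rw [Aset, Finset.mem_inter]
  refine ⟨zero_mem_Uset h1 hε L, ?_⟩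
  simp only [Wset, Finset.mem_filter, Finset.mem_univ, true_and, map_zero, dfc_zero h1, not_lt.mpr hε,
    Finset.filter_false, Finset.card_empty, Nat.cast_zero]
  positivity

open scoped Classical in
/-- Approximate orthogonality to most of `U` is preserved by sums, with worse constants. -/
lemma Wset_add (h0 : ∀ a, 0 ≤ f a) (h1 : ∑ a, f a = 1) {ε δ : ℝ} {U : Finset V} {x y : V}
    (hx : x ∈ Wset f B ε δ U) (hy : y ∈ Wset f B ε δ U) :
    x + y ∈ Wset f B (4 * ε) (2 * δ) U := by
  simp only [Wset, Finset.mem_filter, Finset.mem_univ, true_and] at hx hy ⊢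
  have hsub : (U.filter fun v => 4 * ε < dfc f (B v (x + y))) ⊆
      (U.filter fun v => ε < dfc f (B v x)) ∪ (U.filter fun v => ε < dfc f (B v y)) := by
    intro v hv
    simp only [Finset.mem_filter, Finset.mem_union] at hv ⊢
    by_contra hcon
    push Not at hcon
    have h2 := dfc_add h0 h1 (B v x) (B v y)
    rw [← map_add] at h2
    linarith [hcon.1 hv.1, hcon.2 hv.1, hv.2]
  have hc := (Finset.card_le_card hsub).trans (Finset.card_union_le _ _)
  have hc' : ((U.filter fun v => 4 * ε < dfc f (B v (x + y))).card : ℝ) ≤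
      (U.filter fun v => ε < dfc f (B v x)).card + (U.filter fun v => ε < dfc f (B v y)).card := by
    exact_mod_cast hc
  linarith

open scoped Classical in
lemma dbl_subset_Wset (h0 : ∀ a, 0 ≤ f a) (h1 : ∑ a, f a = 1) {ε δ : ℝ} {U A : Finset V}
    (hA : A ⊆ Wset f B ε δ U) (t : ℕ) :
    dbl A t ⊆ Wset f B (4 ^ t * ε) (2 ^ t * δ) U := by
  induction t with
  | zero => simpa [dbl] using hA
  | succ t ih =>
    intro z hz
    simp only [dbl, Finset.mem_add] at hz
    obtain ⟨x, hx, y, hy, rfl⟩ := hz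
    have := Wset_add h0 h1 (ih hx) (ih hy)
    rwa [← mul_assoc, ← mul_assoc, ← pow_succ', ← pow_succ'] at this

open scoped Classical in
/-- Sets which are approximately orthogonal to each other cannot both be large. -/
lemma card_mul_card_le (hn : B.Nondegenerate)
    (h0 : ∀ a, 0 ≤ f a) (h1 : ∑ a, f a = 1) (hα : ∀ a, f a ≤ 1 - α) (hα0 : 0 < α)
    {ε δ : ℝ} (hε0 : 0 ≤ ε) (hεδ : ε + δ ≤ α / 2) {U X : Finset V}
    (hX : X ⊆ Wset f B ε δ U) :
    α ^ 2 / 4 * (X.card * U.card) ≤ Fintype.card V := by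
  have hlow : (X.card : ℝ) * ((1 - ε - δ) * U.card) ≤
      ∑ v ∈ U, ∑ x ∈ X, ‖chr f (B v x)‖ ^ 2 := by
    rw [Finset.sum_comm, ← nsmul_eq_mul]
    refine Finset.card_nsmul_le_sum _ _ _ fun x hx => ?_
    have hx' := hX hx
    simp only [Wset, Finset.mem_filter, Finset.mem_univ, true_and] at hx'
    have : ∑ v ∈ U, ((1 - ε) - if ε < dfc f (B v x) then 1 else 0) ≤
        ∑ v ∈ U, ‖chr f (B v x)‖ ^ 2 := by
      refine Finset.sum_le_sum fun v _ => ?_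
      have hd := norm_chr_sq_eq f (B v x)
      have hε : 0 ≤ ‖chr f (B v x)‖ ^ 2 := by positivity
      split_ifs with hlt
      · linarith
      · linarith
    refine le_trans (le_of_eq ?_) (le_trans (sub_le_sub_left hx' ((1 - ε) * U.card)) ?_)
    · ring
    · refine le_trans (le_of_eq ?_) this
      rw [Finset.sum_sub_distrib, Finset.sum_const, nsmul_eq_mul, Finset.sum_boole]
      ring
  have hup := spectral_chr hn h0 h1 hα U X
  set Z : ℝ := (X.card : ℝ) * U.card with hZ
  have hZ0 : 0 ≤ Z := by positivity
  have h3 : α / 2 * Z ≤ Real.sqrt (Z * Fintype.card V) := by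
    rw [mul_comm (U.card : ℝ), ← hZ] at hup
    nlinarith
  have h4 : (α / 2 * Z) ^ 2 ≤ Z * Fintype.card V := by
    rw [← Real.sq_sqrt (show 0 ≤ Z * Fintype.card V by positivity)]
    gcongr
  rcases hZ0.eq_or_lt with hz | hz
  · rw [← hz]; simp
  · refine le_of_mul_le_mul_left (?_ : Z * _ ≤ Z * _) hz
    nlinarith

end Structure

/-! ### Structure of tuples with small defect -/

section Structure
variable {p : ℕ} [Fact p.Prime] {f : ZMod p → ℝ} {α : ℝ}
variable {V : Type*} [AddCommGroup V] [Module (ZMod p) V] [Fintype V]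
variable {B : LinearMap.BilinForm (ZMod p) V}

open scoped Classical in
/-- Greedy choice: a short list `L` of elements of `S` such that every element of `S` is almost
orthogonal to most of `Uset L`. Each step that fails shrinks `Uset L` by a factor `1 - δ`. -/
lemma greedy (h1 : ∑ a, f a = 1) {ε δ : ℝ} (hε : 0 ≤ ε) (hδ1 : δ ≤ 1) (S : Finset V)
    {s : ℕ} (hs : Real.log (Fintype.card V) ≤ δ * s) (hs0 : 0 < δ) :
    ∃ L : Finset V, L ⊆ S ∧ L.card ≤ s ∧ S ⊆ Wset f B ε δ (Uset f B ε L) := by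
  let 𝒞 : Finset (Finset V) := S.powerset.filter fun L =>
    ((Uset f B ε L).card : ℝ) ≤ (1 - δ) ^ L.card * Fintype.card V
  have hne : 𝒞.Nonempty := by
    refine ⟨∅, ?_⟩
    refine Finset.mem_filter.mpr ⟨Finset.empty_mem_powerset _, ?_⟩
    simp [Uset, Finset.card_univ]
  obtain ⟨L, hL, hmax⟩ := Finset.exists_max_image 𝒞 Finset.card hne
  simp only [𝒞, Finset.mem_filter, Finset.mem_powerset] at hL hmax
  have hU1 : (1 : ℝ) ≤ (Uset f B ε L).card := by
    exact_mod_cast Finset.card_pos.mpr ⟨0, zero_mem_Uset h1 hε L⟩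
  have hV : (0 : ℝ) < Fintype.card V := by exact_mod_cast Fintype.card_pos
  refine ⟨L, hL.1, ?_, ?_⟩
  · have h2 : (1 - δ) ^ L.card ≤ Real.exp (-(δ * L.card)) := by
      calc (1 - δ) ^ L.card ≤ (Real.exp (-δ)) ^ L.card :=
            pow_le_pow_left₀ (by linarith) (by linarith [Real.add_one_le_exp (-δ)]) _
        _ = _ := by rw [← Real.exp_nat_mul]; congr 1; ring
    have h3 : 1 ≤ Real.exp (-(δ * L.card)) * Fintype.card V :=
      hU1.trans (hL.2.trans (by gcongr))
    have h4 : δ * L.card ≤ Real.log (Fintype.card V) := by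
      rw [Real.le_log_iff_exp_le hV]
      rw [Real.exp_neg] at h3
      have := Real.exp_pos (δ * L.card)
      field_simp at h3
      exact h3
    have h5 : δ * L.card ≤ δ * s := h4.trans hs
    exact_mod_cast le_of_mul_le_mul_left h5 hs0
  · intro x hx
    by_contra hcon
    simp only [Wset, Finset.mem_filter, Finset.mem_univ, true_and, not_le] at hcon
    have hxL : x ∉ L := by
      intro hxL
      have : ((Uset f B ε L).filter fun v => ε < dfc f (B v x)) = ∅ := by
        refine Finset.filter_false_of_mem fun v hv => ?_
        simp only [Uset, Finset.mem_filter, Finset.mem_univ, true_and] at hv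
        exact not_lt.mpr (hv x hxL)
      rw [this] at hcon
      simp at hcon
      have : 0 ≤ δ * (Uset f B ε L).card := by positivity
      linarith
    have hsplit := Finset.card_filter_add_card_filter_not (s := Uset f B ε L)
      (fun v => ε < dfc f (B v x))
    have hins : Uset f B ε (insert x L) = (Uset f B ε L).filter fun v => ¬ ε < dfc f (B v x) := by
      ext v
      simp [Uset, and_comm]
    rw [← hins] at hsplit
    have hsplit' : ((((Uset f B ε L).filter fun v => ε < dfc f (B v x)).card : ℝ)) +
        (Uset f B ε (insert x L)).card = (Uset f B ε L).card := by exact_mod_cast hsplit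
    have := hmax (insert x L) ⟨Finset.insert_subset hx hL.1, by
      rw [Finset.card_insert_of_notMem hxL, pow_succ]
      have : ((Uset f B ε (insert x L)).card : ℝ) ≤ (1 - δ) * (Uset f B ε L).card := by linarith
      nlinarith [hL.2]⟩
    rw [Finset.card_insert_of_notMem hxL] at this
    omega

open scoped Classical in
/-- Padding by `0` turns a list of length at most `s` into one of length `s`, without changing the
set of vectors almost orthogonal to it. -/
lemma exists_tuple (f : ZMod p → ℝ) (B : LinearMap.BilinForm (ZMod p) V) (h1 : ∑ a, f a = 1)
    {ε : ℝ} (hε : 0 ≤ ε) {s : ℕ} (L : Finset V) (hL : L.card ≤ s) :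
    ∃ g : Fin s → V, Uset f B ε L = Uset f B ε (Finset.univ.image g) := by
  refine ⟨fun i => L.toList.getD i 0, ?_⟩
  ext v
  simp only [Uset, Finset.mem_filter, Finset.mem_univ, true_and, Finset.mem_image,
    forall_exists_index, forall_apply_eq_imp_iff]
  constructor
  · intro h i
    rcases lt_or_ge (i : ℕ) L.toList.length with hi | hi
    · rw [List.getD_eq_getElem _ _ hi]
      exact h _ (Finset.mem_toList.mp (List.getElem_mem hi))
    · rw [List.getD_eq_default _ _ hi]
      simpa [dfc_zero h1] using hε
  · intro h x hx
    obtain ⟨i, hi, rfl⟩ := List.getElem_of_mem (Finset.mem_toList.mpr hx)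
    have hi' : i < s := lt_of_lt_of_le (by simpa using hi) hL
    have := h ⟨i, hi'⟩
    rwa [List.getD_eq_getElem _ _ hi] at this

/-- `u` takes values outside `A` at no more than `e` indices. -/
def Few {n : ℕ} (e : ℕ) (u : Fin n → V) (A : Set V) : Prop :=
  ∃ E : Finset (Fin n), E.card ≤ e ∧ ∀ i ∉ E, u i ∈ A

lemma Few.mono {n : ℕ} {e : ℕ} {u : Fin n → V} {A A' : Set V} (h : Few e u A) (hA : A ⊆ A') :
    Few e u A' := by
  obtain ⟨E, hE, h⟩ := h
  exact ⟨E, hE, fun i hi => hA (h i hi)⟩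

open scoped Classical in
/-- A tuple with small total defect is mostly contained in some `Aset` of a short list. -/
lemma few_Aset (h0 : ∀ a, 0 ≤ f a) (h1 : ∑ a, f a = 1) {n : ℕ} (u : Fin n → V)
    {ε δ D T : ℝ} {s e : ℕ} (hε : 0 < ε) (hδ : 0 < δ) (hδ1 : δ ≤ 1) (hT : 0 < T)
    (hs : Real.log (Fintype.card V) ≤ δ * s) (he : D / T + s * (T / ε) ≤ e)
    (hD : ∑ i, ∑ j, dfc f (B (u i) (u j)) ≤ D) :
    ∃ g : Fin s → V, Few e u (Aset f B ε δ (Finset.univ.image g)) := by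
  let G : Finset (Fin n) := Finset.univ.filter fun j => ∑ i, dfc f (B (u i) (u j)) ≤ T
  obtain ⟨L, hLS, hLs, hSW⟩ := greedy (B := B) h1 hε.le hδ1 (G.image u) hs hδ
  obtain ⟨g, hg⟩ := exists_tuple f B h1 hε.le L hLs
  refine ⟨g, Gᶜ ∪ L.biUnion fun x => Finset.univ.filter fun i => ε < dfc f (B (u i) x), ?_, ?_⟩
  · have hGc : (Gᶜ.card : ℝ) * T ≤ D := by
      rw [← nsmul_eq_mul]
      calc Gᶜ.card • T ≤ ∑ j ∈ Gᶜ, ∑ i, dfc f (B (u i) (u j)) := by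
            refine Finset.card_nsmul_le_sum _ _ _ fun j hj => ?_
            simp only [G, Finset.mem_compl, Finset.mem_filter, Finset.mem_univ, true_and,
              not_le] at hj
            exact hj.le
        _ ≤ ∑ j, ∑ i, dfc f (B (u i) (u j)) :=
            Finset.sum_le_sum_of_subset_of_nonneg (Finset.subset_univ _) fun _ _ _ =>
              Finset.sum_nonneg fun _ _ => dfc_nonneg h0 h1 _
        _ ≤ D := by rw [Finset.sum_comm]; exact hD
    have hGc' : (Gᶜ.card : ℝ) ≤ D / T := by rwa [le_div_iff₀ hT]
    have hx : ∀ x ∈ L, ((Finset.univ.filter fun i => ε < dfc f (B (u i) x)).card : ℝ) ≤ T / ε := by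
      intro x hx
      obtain ⟨j, hj, rfl⟩ := Finset.mem_image.mp (hLS hx)
      simp only [G, Finset.mem_filter, Finset.mem_univ, true_and] at hj
      rw [le_div_iff₀ hε, ← nsmul_eq_mul]
      calc _ ≤ ∑ i ∈ Finset.univ.filter (fun i => ε < dfc f (B (u i) (u j))),
              dfc f (B (u i) (u j)) := by
            refine Finset.card_nsmul_le_sum _ _ _ fun i hi => ?_
            simp only [Finset.mem_filter, Finset.mem_univ, true_and] at hi
            exact hi.le
        _ ≤ ∑ i, dfc f (B (u i) (u j)) :=
            Finset.sum_le_sum_of_subset_of_nonneg (Finset.subset_univ _) fun _ _ _ =>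
              dfc_nonneg h0 h1 _
        _ ≤ T := hj
    have hbi : ((L.biUnion fun x => Finset.univ.filter fun i => ε < dfc f (B (u i) x)).card : ℝ)
        ≤ s * (T / ε) := by
      calc _ ≤ ((∑ x ∈ L, (Finset.univ.filter fun i => ε < dfc f (B (u i) x)).card : ℕ) : ℝ) := by
            exact_mod_cast Finset.card_biUnion_le
        _ ≤ ∑ x ∈ L, T / ε := by
            push_cast
            exact Finset.sum_le_sum hx
        _ = L.card * (T / ε) := by simp
        _ ≤ s * (T / ε) := by gcongr
    have hu : ((Gᶜ ∪ L.biUnion fun x => Finset.univ.filter fun i => ε < dfc f (B (u i) x)).card : ℝ)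
        ≤ Gᶜ.card + (L.biUnion fun x => Finset.univ.filter fun i => ε < dfc f (B (u i) x)).card := by
      exact_mod_cast Finset.card_union_le _ _
    have : ((Gᶜ ∪ L.biUnion fun x => Finset.univ.filter fun i => ε < dfc f (B (u i) x)).card : ℝ)
        ≤ e := by linarith
    exact_mod_cast this
  · intro i hi
    simp only [Finset.mem_union, Finset.mem_compl, not_or, not_not, Finset.mem_biUnion,
      Finset.mem_filter, Finset.mem_univ, true_and, not_exists, not_and, not_lt] at hi
    rw [Aset, ← hg, Finset.coe_inter]
    refine ⟨?_, hSW (Finset.mem_image_of_mem u hi.1)⟩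
    simp only [Uset, Finset.coe_filter, Finset.mem_univ, true_and, Set.mem_ofPred_eq]
    exact hi.2

open scoped Classical in
/-- A tuple of small total defect is isotropic, or mostly lies in an `Aset` of size at most
`p ^ k / 2` given by a list of length `s`, or mostly lies in a subspace of size at most `p ^ k / 2`,
or mostly lies in a subspace of size at most `p ^ k` to which it is not orthogonal. -/
lemma structure_lemma (hB : B.IsSymm) (hn : B.Nondegenerate)
    (h0 : ∀ a, 0 ≤ f a) (h1 : ∑ a, f a = 1) (hα : ∀ a, f a ≤ 1 - α) (hα0 : 0 < α) (hα1 : α ≤ 1)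
    {k : ℕ} (hk : 1 ≤ k) (hV : Module.finrank (ZMod p) V = 2 * k)
    {n : ℕ} (u : Fin n → V)
    {ε δ D T : ℝ} {s e t₀ : ℕ} (hε : 0 < ε) (hδ : 0 < δ) (hδ1 : δ ≤ 1) (hT : 0 < T)
    (ht₀ : 16 / α ^ 2 < (3 / 2) ^ t₀) (hεδ : 4 ^ t₀ * ε + 2 ^ t₀ * δ ≤ α / 2)
    (hp : 12 / α ^ 2 < p)
    (hs : Real.log (Fintype.card V) ≤ δ * s) (he : D / T + s * (T / ε) ≤ e)
    (hD : ∑ i, ∑ j, dfc f (B (u i) (u j)) ≤ D) :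
    (∀ i j, B (u i) (u j) = 0) ∨
    (∃ g : Fin s → V, ((Aset f B ε δ (Finset.univ.image g)).card : ℝ) ≤ (p : ℝ) ^ k / 2 ∧
      Few e u (Aset f B ε δ (Finset.univ.image g))) ∨
    (∃ H : Submodule (ZMod p) V, (Fintype.card H : ℝ) ≤ (p : ℝ) ^ k / 2 ∧ Few e u H) ∨
    (∃ H : Submodule (ZMod p) V, (Fintype.card H : ℝ) ≤ (p : ℝ) ^ k ∧ Few e u H ∧
      ∃ i, ∃ h ∈ H, B (u i) h ≠ 0) := by
  have hp1 : (12 : ℝ) < p := by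
    refine lt_of_le_of_lt ?_ hp
    rw [le_div_iff₀ (by positivity)]
    nlinarith
  have hcardV : (Fintype.card V : ℝ) = (p : ℝ) ^ (2 * k) := by
    rw [Module.card_eq_pow_finrank (K := ZMod p) (V := V), ZMod.card, hV]; push_cast; rfl
  have hcardH : ∀ H : Submodule (ZMod p) V,
      (Fintype.card H : ℝ) = (p : ℝ) ^ Module.finrank (ZMod p) H := by
    intro H
    rw [Module.card_eq_pow_finrank (K := ZMod p) (V := H), ZMod.card]; push_cast; rfl
  have hsmall : ∀ H : Submodule (ZMod p) V, Module.finrank (ZMod p) H < k →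
      (Fintype.card H : ℝ) ≤ (p : ℝ) ^ k / 2 := by
    intro H hH
    rw [hcardH]
    have h2 : (p : ℝ) ^ (Module.finrank (ZMod p) H) * p ≤ (p : ℝ) ^ k := by
      rw [← pow_succ]
      exact pow_le_pow_right₀ (by linarith) hH
    have : (0 : ℝ) < (p : ℝ) ^ (Module.finrank (ZMod p) H) := by positivity
    nlinarith
  obtain ⟨g, hg⟩ := few_Aset h0 h1 u hε hδ hδ1 hT hs he hD
  set L := Finset.univ.image g with hL
  set A := Aset f B ε δ L with hA
  by_cases hsm : (A.card : ℝ) ≤ (p : ℝ) ^ k / 2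
  · exact Or.inr (Or.inl ⟨g, hsm, hg⟩)
  push Not at hsm
  have hpk : (0 : ℝ) < (p : ℝ) ^ k := by positivity
  have hAU : A ⊆ Uset f B ε L := Finset.inter_subset_left
  have hAW : A ⊆ Wset f B ε δ (Uset f B ε L) := Finset.inter_subset_right
  have hUcard : (p : ℝ) ^ k / 2 < (Uset f B ε L).card :=
    lt_of_lt_of_le hsm (by exact_mod_cast Finset.card_le_card hAU)
  have hM : ∀ t ≤ t₀, ((dbl A t).card : ℝ) ≤ 8 / α ^ 2 * (p : ℝ) ^ k := by
    intro t ht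
    have hle : (4 : ℝ) ^ t * ε + 2 ^ t * δ ≤ α / 2 := by
      refine le_trans ?_ hεδ
      gcongr <;> norm_num
    have h5 := card_mul_card_le hn h0 h1 hα hα0 (by positivity) hle (dbl_subset_Wset h0 h1 hAW t)
    rw [hcardV, two_mul, pow_add] at h5
    have h6 : α ^ 2 / 4 * ((dbl A t).card * ((p : ℝ) ^ k / 2)) ≤ (p : ℝ) ^ k * (p : ℝ) ^ k := by
      refine le_trans ?_ h5
      gcongr
    have h7 : α ^ 2 / 8 * (dbl A t).card ≤ (p : ℝ) ^ k := by
      refine le_of_mul_le_mul_right (?_ : _ * (p : ℝ) ^ k ≤ _) hpk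
      linarith
    rw [div_mul_eq_mul_div, le_div_iff₀ (by positivity)]
    linarith
  have hbig : 8 / α ^ 2 * (p : ℝ) ^ k < (3 / 2 : ℝ) ^ t₀ * (A.card : ℝ) := by
    calc 8 / α ^ 2 * (p : ℝ) ^ k = 16 / α ^ 2 * ((p : ℝ) ^ k / 2) := by ring
      _ < (3 / 2 : ℝ) ^ t₀ * (A.card : ℝ) := mul_lt_mul'' ht₀ hsm (by positivity) (by positivity)
  -- The sumsets `dbl A t` with `t ≤ t₀` have size `O(p ^ k)`, too small to grow by `3 / 2` each time.
  obtain ⟨H₀, hAH, hHc⟩ := exists_subgroup (zero_mem_Aset h1 hε.le hδ.le L) hM hbig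
  let H : Submodule (ZMod p) V := AddSubgroup.toZModSubmodule p H₀
  have hHc' : (Fintype.card H : ℝ) ≤ 12 / α ^ 2 * (p : ℝ) ^ k := by
    rw [← Nat.card_eq_fintype_card]
    refine le_trans hHc (le_of_eq ?_)
    ring
  have hfewH : Few e u H := hg.mono fun a ha => hAH a ha
  have hdim : Module.finrank (ZMod p) H ≤ k := by
    have : (p : ℝ) ^ Module.finrank (ZMod p) H < (p : ℝ) ^ (k + 1) := by
      rw [← hcardH, pow_succ']
      exact lt_of_le_of_lt hHc' (by gcongr)
    have := (pow_lt_pow_iff_right₀ (by linarith : (1 : ℝ) < p)).mp this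
    omega
  rcases hdim.lt_or_eq with hlt | heq
  · exact Or.inr (Or.inr (Or.inl ⟨H, hsmall H hlt, hfewH⟩))
  by_cases hex : ∃ i, ∃ h ∈ H, B (u i) h ≠ 0
  · exact Or.inr (Or.inr (Or.inr ⟨H, by rw [hcardH, heq], hfewH, hex⟩))
  push Not at hex
  have hperp : ∀ i, u i ∈ B.orthogonal H := by
    intro i
    rw [LinearMap.BilinForm.mem_orthogonal_iff]
    intro h hh
    have h2 := hB.eq (u i) h
    rw [← h2]
    exact hex i h hh
  -- Now `u` lies in `Hᗮ`. If `H` is Lagrangian, then `u` is isotropic; otherwise `u` mostly lies in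
  -- the proper subspace `H ⊓ Hᗮ` of `H`.
  by_cases hHH : H ≤ B.orthogonal H
  · left
    have hd2 : Module.finrank (ZMod p) (B.orthogonal H) = k := by
      rw [LinearMap.BilinForm.finrank_orthogonal hn, hV, heq]; omega
    have hEq : H = B.orthogonal H := Submodule.eq_of_le_of_finrank_eq hHH (by rw [hd2, heq])
    intro i j
    refine hex i (u j) ?_
    rw [hEq]
    exact hperp j
  · right; right; left
    refine ⟨H ⊓ B.orthogonal H, hsmall _ ?_, ?_⟩
    · rw [← heq]
      exact Submodule.finrank_lt_finrank_of_lt (lt_of_le_of_ne inf_le_left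
        fun h => hHH (inf_eq_left.mp h))
    · obtain ⟨E, hE, hu⟩ := hfewH
      exact ⟨E, hE, fun i hi => ⟨hu i hi, hperp i⟩⟩

end Structure

/-! ### Total weight of the non-isotropic tuples -/

section Sums
variable {p : ℕ} [Fact p.Prime] {f : ZMod p → ℝ} {α : ℝ}
variable {V : Type*} [AddCommGroup V] [Module (ZMod p) V] [Fintype V]
variable {B : LinearMap.BilinForm (ZMod p) V}

/-- The modulus of the off-diagonal part of the characteristic function attached to `u`. -/
def wt (f : ZMod p → ℝ) (B : LinearMap.BilinForm (ZMod p) V) {n : ℕ} (u : Fin n → V) : ℝ :=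
  ∏ i, ∏ j, if i < j then ‖chr f (B (u i) (u j))‖ else 1

lemma wt_factor_nonneg {n : ℕ} (u : Fin n → V) (i j : Fin n) :
    0 ≤ if i < j then ‖chr f (B (u i) (u j))‖ else 1 := by
  split_ifs <;> positivity

lemma wt_factor_le_one (h0 : ∀ a, 0 ≤ f a) (h1 : ∑ a, f a = 1) {n : ℕ} (u : Fin n → V)
    (i j : Fin n) : (if i < j then ‖chr f (B (u i) (u j))‖ else 1) ≤ 1 := by
  split_ifs
  · exact norm_chr_le_one h0 h1 _
  · exact le_rfl

lemma wt_nonneg {n : ℕ} (u : Fin n → V) : 0 ≤ wt f B u :=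
  Finset.prod_nonneg fun i _ => Finset.prod_nonneg fun j _ => wt_factor_nonneg u i j

/-- Large total defect forces small weight. The term `n` accounts for the diagonal, which is absent
from `wt`. -/
lemma wt_le_exp (hB : B.IsSymm) {n : ℕ} (u : Fin n → V) :
    wt f B u ≤ Real.exp (-((∑ i, ∑ j, dfc f (B (u i) (u j))) - n) / 4) := by
  set r : Fin n → Fin n → ℝ := fun i j => dfc f (B (u i) (u j)) with hr
  set S := ∑ i, ∑ j, if i < j then r i j else 0 with hS
  have hw : wt f B u ≤ Real.exp (-S / 2) := by
    have : Real.exp (-S / 2) = ∏ i, ∏ j, Real.exp (-(if i < j then r i j else 0) / 2) := by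
      simp_rw [← Real.exp_sum]
      congr 1
      simp_rw [hS, neg_div, Finset.sum_neg_distrib, ← Finset.sum_div]
    rw [this]
    refine Finset.prod_le_prod (fun i _ => Finset.prod_nonneg fun j _ => wt_factor_nonneg u i j)
      fun i _ => Finset.prod_le_prod (fun j _ => wt_factor_nonneg u i j) fun j _ => ?_
    split_ifs
    · exact norm_chr_le_exp _
    · simp
  refine hw.trans (Real.exp_le_exp.mpr ?_)
  have hsym : ∀ i j, r i j = r j i := fun i j => by
    simp only [hr]; rw [hB.eq]
  have hQ : ∑ i, ∑ j, r i j ≤ S + S + n := by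
    have hS2 : S = ∑ i, ∑ j, if j < i then r i j else 0 := by
      rw [hS, Finset.sum_comm]
      simp_rw [hsym]
    have hn : (n : ℝ) = ∑ i : Fin n, ∑ j : Fin n, if i = j then (1 : ℝ) else 0 := by simp
    conv_rhs => rw [hn]; enter [1, 2]; rw [hS2]
    rw [hS, ← Finset.sum_add_distrib, ← Finset.sum_add_distrib]
    refine Finset.sum_le_sum fun i _ => ?_
    rw [← Finset.sum_add_distrib, ← Finset.sum_add_distrib]
    refine Finset.sum_le_sum fun j _ => ?_
    rcases lt_trichotomy i j with h | h | h
    · simp [h, h.ne, h.not_gt]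
    · subst h; simpa using dfc_le_one f _
    · simp [h, h.ne', h.not_gt]
  linarith

open scoped Classical in
/-- Only the factors that involve the index `i` are kept. -/
lemma wt_le_row (hB : B.IsSymm) (h0 : ∀ a, 0 ≤ f a) (h1 : ∑ a, f a = 1) {n : ℕ} (u : Fin n → V)
    (i : Fin n) :
    wt f B u ≤ ∏ j, if j = i then 1 else ‖chr f (B (u i) (u j))‖ := by
  set c : Fin n → Fin n → ℝ := fun i j => if i < j then ‖chr f (B (u i) (u j))‖ else 1 with hc
  have c0 : ∀ i j, 0 ≤ c i j := wt_factor_nonneg u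
  have c1 : ∀ i j, c i j ≤ 1 := wt_factor_le_one h0 h1 u
  calc wt f B u = (∏ j, c i j) * ∏ a ∈ Finset.univ.erase i, ∏ b, c a b :=
        (Finset.mul_prod_erase _ _ (Finset.mem_univ i)).symm
    _ ≤ (∏ j, c i j) * ∏ a ∈ Finset.univ.erase i, c a i := by
        gcongr with a ha
        · rw [← Finset.mul_prod_erase _ _ (Finset.mem_univ i)]
          exact mul_le_of_le_one_right (c0 _ _) (Finset.prod_le_one (fun j _ => c0 _ _)
            fun j _ => c1 _ _)
    _ = (∏ j, c i j) * ∏ a, c a i := by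
        rw [← Finset.mul_prod_erase Finset.univ (fun a => c a i) (Finset.mem_univ i)]
        simp [hc]
    _ = ∏ j, c i j * c j i := Finset.prod_mul_distrib.symm
    _ = _ := by
        refine Finset.prod_congr rfl fun j _ => ?_
        have hs : B (u j) (u i) = B (u i) (u j) := hB.eq _ _
        rcases lt_trichotomy i j with h | h | h
        · simp [hc, h, h.ne', h.not_gt]
        · subst h; simp [hc]
        · simp [hc, h, h.ne, h.not_gt, hs]

open scoped Classical in
/-- A product majorant summed over all tuples: the coordinates in `E` are free, the other ones
contribute `∑ v, G v` each. -/
lemma sum_prod_le {n : ℕ} (E : Finset (Fin n)) {G : V → ℝ} (hG : ∀ v, 0 ≤ G v) {β q : ℝ} {m : ℕ}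
    (hβ0 : 0 ≤ β) (hβ1 : β ≤ 1) (hq : 1 ≤ q) (hS : ∑ v, G v ≤ β * q) (hE : E.card ≤ m) :
    ∑ u : Fin n → V, ∏ j, (if j ∈ E then 1 else G (u j)) ≤
      (Fintype.card V : ℝ) ^ m * (q ^ n * β ^ (n - m)) := by
  have h := Finset.prod_univ_sum (fun _ : Fin n => (Finset.univ : Finset V))
    (fun j v => if j ∈ E then (1 : ℝ) else G v)
  rw [Fintype.piFinset_univ] at h
  rw [← h]
  have hS0 : 0 ≤ ∑ v, G v := Finset.sum_nonneg fun v _ => hG v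
  have hV1 : (1 : ℝ) ≤ Fintype.card V := by exact_mod_cast Fintype.card_pos
  have hcard : E.card + Eᶜ.card = n := by simp
  calc ∏ j, ∑ v, (if j ∈ E then (1 : ℝ) else G v)
      = ∏ j, (if j ∈ E then (Fintype.card V : ℝ) else ∑ v, G v) := by
        refine Finset.prod_congr rfl fun j _ => ?_
        split_ifs <;> simp [Finset.card_univ]
    _ = (Fintype.card V : ℝ) ^ E.card * (∑ v, G v) ^ Eᶜ.card := by
        rw [← Finset.prod_mul_prod_compl E]
        congr 1
        · rw [Finset.prod_congr rfl (fun j hj => if_pos hj)]; simp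
        · rw [Finset.prod_congr rfl (fun j hj => if_neg (Finset.mem_compl.mp hj))]; simp
    _ ≤ (Fintype.card V : ℝ) ^ m * (β * q) ^ Eᶜ.card := by gcongr
    _ = (Fintype.card V : ℝ) ^ m * (q ^ Eᶜ.card * β ^ Eᶜ.card) := by rw [mul_pow, mul_comm (β ^ _)]
    _ ≤ _ := by
        have h1 : q ^ Eᶜ.card ≤ q ^ n := pow_le_pow_right₀ hq (by omega)
        have h2 : β ^ Eᶜ.card ≤ β ^ (n - m) := pow_le_pow_of_le_one hβ0 hβ1 (by omega)
        gcongr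

open scoped Classical in
/-- The exceptional indices, listed with repetitions. -/
lemma Few.exists_fun {n e : ℕ} (hn : 0 < n) {u : Fin n → V} {A : Set V} (h : Few e u A) :
    ∃ g : Fin e → Fin n, ∀ i ∉ Finset.univ.image g, u i ∈ A := by
  obtain ⟨E, hE, h⟩ := h
  refine ⟨fun t => E.toList.getD t ⟨0, hn⟩, fun i hi => h i fun hiE => hi ?_⟩
  obtain ⟨t, ht, rfl⟩ := List.getElem_of_mem (Finset.mem_toList.mpr hiE)
  have ht' : t < e := lt_of_lt_of_le (by simpa using ht) hE
  refine Finset.mem_image.mpr ⟨⟨t, ht'⟩, Finset.mem_univ _, ?_⟩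
  exact List.getD_eq_getElem _ _ ht

open scoped Classical in
/-- Total weight of the tuples that are not isotropic. The first term comes from the tuples of total
defect above `D`, the second from the three remaining cases of `structure_lemma`. -/
lemma error_bound (hB : B.IsSymm) (hnd : B.Nondegenerate)
    (h0 : ∀ a, 0 ≤ f a) (h1 : ∑ a, f a = 1) (hα : ∀ a, f a ≤ 1 - α) (hα0 : 0 < α) (hα1 : α ≤ 1)
    {k : ℕ} (hk : 1 ≤ k) (hV : Module.finrank (ZMod p) V = 2 * k)
    {n : ℕ} (hn : 0 < n)
    {ε δ D T β : ℝ} {s e t₀ : ℕ} (hε : 0 < ε) (hδ : 0 < δ) (hδ1 : δ ≤ 1) (hT : 0 < T)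
    (ht₀ : 16 / α ^ 2 < (3 / 2) ^ t₀) (hεδ : 4 ^ t₀ * ε + 2 ^ t₀ * δ ≤ α / 2)
    (hp : 12 / α ^ 2 < p)
    (hs : Real.log (Fintype.card V) ≤ δ * s) (he : D / T + s * (T / ε) ≤ e)
    (hβ2 : 1 / 2 ≤ β) (hβα : Real.sqrt (1 - α) ≤ β) (hβ1 : β ≤ 1) :
    ∑ u : Fin n → V with ¬ ∀ i j, B (u i) (u j) = 0, wt f B u ≤
      (Fintype.card V : ℝ) ^ n * Real.exp (-(D - n) / 4) +
      3 * ((Fintype.card V : ℝ) ^ (s + 2 * k + 1) * ((n : ℝ) ^ (e + 1) *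
        ((Fintype.card V : ℝ) ^ (e + 1) * (((p : ℝ) ^ k) ^ n * β ^ (n - (e + 1)))))) := by
  set X := (Fintype.card V : ℝ) ^ (e + 1) * (((p : ℝ) ^ k) ^ n * β ^ (n - (e + 1))) with hX
  set N : ℝ := (Fintype.card V : ℝ) with hN
  have hX0 : 0 ≤ X := by positivity
  have hN1 : 1 ≤ N := by rw [hN]; exact_mod_cast Fintype.card_pos
  have hn1 : (1 : ℝ) ≤ n := by exact_mod_cast hn
  have hp1 : (1 : ℝ) ≤ p := by exact_mod_cast (Fact.out : p.Prime).one_lt.le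
  have hpk1 : (1 : ℝ) ≤ (p : ℝ) ^ k := one_le_pow₀ hp1
  let im : (Fin e → Fin n) → Finset (Fin n) := fun g => Finset.univ.image g
  have him : ∀ g, (im g).card ≤ e := fun g => by
    simpa using Finset.card_image_le (s := Finset.univ) (f := g)
  let ind : Set V → V → ℝ := fun A v => if v ∈ A then 1 else 0
  have ind0 : ∀ A v, 0 ≤ ind A v := fun A v => by
    simp only [ind]; split_ifs <;> norm_num
  -- Majorants for the last three cases of `structure_lemma`, indexed by the list `g` or the spanning
  -- family `b`, by the exceptional indices `h` and, in the last case, by the non-orthogonal index `i`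
  -- and the value `x` of `u i`. Fixing `x` makes the majorant a product over the coordinates of `u`.
  let t2 : (Fin s → V) → (Fin e → Fin n) → (Fin n → V) → ℝ := fun g h u =>
    if ((Aset f B ε δ (Finset.univ.image g)).card : ℝ) ≤ (p : ℝ) ^ k / 2 then
      ∏ j, (if j ∈ im h then 1 else ind (Aset f B ε δ (Finset.univ.image g)) (u j)) else 0
  let sp : (Fin (2 * k) → V) → Submodule (ZMod p) V := fun b => Submodule.span _ (Set.range b)
  let t3 : (Fin (2 * k) → V) → (Fin e → Fin n) → (Fin n → V) → ℝ := fun b h u =>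
    if (Fintype.card (sp b) : ℝ) ≤ (p : ℝ) ^ k / 2 then
      ∏ j, (if j ∈ im h then 1 else ind (sp b) (u j)) else 0
  let t4 : (Fin (2 * k) → V) → (Fin e → Fin n) → Fin n → V → (Fin n → V) → ℝ := fun b h i x u =>
    if (Fintype.card (sp b) : ℝ) ≤ (p : ℝ) ^ k ∧ ∃ y ∈ sp b, B x y ≠ 0 then
      ∏ j, (if j ∈ insert i (im h) then 1 else ind (sp b) (u j) * ‖chr f (B x (u j))‖) else 0
  have t2n : ∀ g h u, 0 ≤ t2 g h u := fun g h u => by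
    simp only [t2]; split_ifs
    · exact Finset.prod_nonneg fun j _ => by split_ifs; exacts [zero_le_one, ind0 _ _]
    · exact le_rfl
  have t3n : ∀ g h u, 0 ≤ t3 g h u := fun g h u => by
    simp only [t3]; split_ifs
    · exact Finset.prod_nonneg fun j _ => by split_ifs; exacts [zero_le_one, ind0 _ _]
    · exact le_rfl
  have t4n : ∀ g h i x u, 0 ≤ t4 g h i x u := fun g h i x u => by
    simp only [t4]; split_ifs
    · exact Finset.prod_nonneg fun j _ => by
        split_ifs; exacts [zero_le_one, mul_nonneg (ind0 _ _) (norm_nonneg _)]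
    · exact le_rfl
  have ind1 : ∀ {A : Set V} {v}, v ∈ A → ind A v = 1 := fun h => by simp [ind, h]
  have hsp : ∀ H : Submodule (ZMod p) V, ∃ b, sp b = H := by
    intro H
    have hfr : Module.finrank (ZMod p) H ≤ 2 * k := hV ▸ Submodule.finrank_le H
    let bs := Module.finBasis (ZMod p) H
    refine ⟨fun t => if ht : (t : ℕ) < Module.finrank (ZMod p) H then (bs ⟨t, ht⟩ : V) else 0, ?_⟩
    apply le_antisymm
    · refine Submodule.span_le.mpr ?_
      rintro _ ⟨t, rfl⟩
      dsimp only
      split_ifs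
      · exact (bs _).2
      · exact H.zero_mem
    · intro v hv
      have h2 := bs.sum_repr ⟨v, hv⟩
      have h3 : v = ∑ i, bs.repr ⟨v, hv⟩ i • (bs i : V) := by
        have := congrArg (H.subtype) h2
        rw [map_sum] at this
        exact this.symm
      rw [h3]
      refine Submodule.sum_mem _ fun i _ => Submodule.smul_mem _ _ (Submodule.subset_span ?_)
      exact ⟨⟨i, lt_of_lt_of_le i.2 hfr⟩, by simp⟩
  have hwt1 : ∀ u : Fin n → V, wt f B u ≤ 1 := fun u =>
    Finset.prod_le_one (fun i _ => Finset.prod_nonneg fun j _ => wt_factor_nonneg u i j) fun i _ =>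
      Finset.prod_le_one (fun j _ => wt_factor_nonneg u i j) fun j _ => wt_factor_le_one h0 h1 u i j
  set Y := Real.exp (-(D - n) / 4) with hY
  have hY0 : 0 < Y := Real.exp_pos _
  have key : ∀ u : Fin n → V, (¬ ∀ i j, B (u i) (u j) = 0) → wt f B u ≤
      Y + (∑ g, ∑ h, t2 g h u + ∑ b, ∑ h, t3 b h u + ∑ b, ∑ h, ∑ i, ∑ x, t4 b h i x u) := by
    intro u hu
    have s2 : 0 ≤ ∑ g, ∑ h, t2 g h u :=
      Finset.sum_nonneg fun _ _ => Finset.sum_nonneg fun _ _ => t2n _ _ _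
    have s3 : 0 ≤ ∑ g, ∑ h, t3 g h u :=
      Finset.sum_nonneg fun _ _ => Finset.sum_nonneg fun _ _ => t3n _ _ _
    have s4 : 0 ≤ ∑ b, ∑ h, ∑ i, ∑ x, t4 b h i x u :=
      Finset.sum_nonneg fun _ _ => Finset.sum_nonneg fun _ _ =>
        Finset.sum_nonneg fun _ _ => Finset.sum_nonneg fun _ _ => t4n _ _ _ _ _
    rcases lt_or_ge D (∑ i, ∑ j, dfc f (B (u i) (u j))) with hD | hD
    · have : wt f B u ≤ Y := (wt_le_exp hB u).trans (Real.exp_le_exp.mpr (by linarith))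
      linarith
    rcases structure_lemma hB hnd h0 h1 hα hα0 hα1 hk hV u hε hδ hδ1 hT ht₀ hεδ hp hs he hD with
      h | ⟨g, hg, hf⟩ | ⟨H, hH, hf⟩ | ⟨H, hH, hf, i, y, hy, hi⟩
    · exact absurd h hu
    · obtain ⟨h, hh⟩ := hf.exists_fun hn
      have e2 : t2 g h u = 1 := by
        simp only [t2]
        rw [if_pos hg]
        refine Finset.prod_eq_one fun j _ => ?_
        split_ifs with hj
        · rfl
        · exact ind1 (hh j hj)
      have : t2 g h u ≤ ∑ g, ∑ h, t2 g h u :=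
        (Finset.single_le_sum (f := fun h => t2 g h u) (fun _ _ => t2n _ _ _)
          (Finset.mem_univ h)).trans
        (Finset.single_le_sum (f := fun g => ∑ h, t2 g h u)
          (fun _ _ => Finset.sum_nonneg fun _ _ => t2n _ _ _) (Finset.mem_univ g))
      linarith [hwt1 u]
    · obtain ⟨h, hh⟩ := hf.exists_fun hn
      obtain ⟨b, rfl⟩ := hsp H
      have e2 : t3 b h u = 1 := by
        simp only [t3]
        rw [if_pos hH]
        refine Finset.prod_eq_one fun j _ => ?_
        split_ifs with hj
        · rfl
        · exact ind1 (hh j hj)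
      have : t3 b h u ≤ ∑ g, ∑ h, t3 g h u :=
        (Finset.single_le_sum (f := fun h => t3 b h u) (fun _ _ => t3n _ _ _)
          (Finset.mem_univ h)).trans
        (Finset.single_le_sum (f := fun g => ∑ h, t3 g h u)
          (fun _ _ => Finset.sum_nonneg fun _ _ => t3n _ _ _) (Finset.mem_univ b))
      linarith [hwt1 u]
    · obtain ⟨h, hh⟩ := hf.exists_fun hn
      obtain ⟨b, rfl⟩ := hsp H
      have e2 : wt f B u ≤ t4 b h i (u i) u := by
        simp only [t4]
        rw [if_pos ⟨hH, y, hy, hi⟩]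
        refine (wt_le_row hB h0 h1 u i).trans (Finset.prod_le_prod (fun j _ => ?_) fun j _ => ?_)
        · split_ifs <;> positivity
        · by_cases hji : j = i
          · simp [hji]
          · by_cases hj : j ∈ im h
            · simp only [hji, hj, Finset.mem_insert, or_true, if_true, if_false]
              exact norm_chr_le_one h0 h1 _
            · simp only [hji, hj, Finset.mem_insert, or_false, if_false]
              rw [ind1 (hh j hj), one_mul]
      have : t4 b h i (u i) u ≤ ∑ b, ∑ h, ∑ i, ∑ x, t4 b h i x u :=
        (Finset.single_le_sum (f := fun x => t4 b h i x u) (fun _ _ => t4n _ _ _ _ _)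
          (Finset.mem_univ (u i))).trans
        ((Finset.single_le_sum (f := fun i => ∑ x, t4 b h i x u)
          (fun _ _ => Finset.sum_nonneg fun _ _ => t4n _ _ _ _ _) (Finset.mem_univ i)).trans
        ((Finset.single_le_sum (f := fun h => ∑ i, ∑ x, t4 b h i x u)
          (fun _ _ => Finset.sum_nonneg fun _ _ => Finset.sum_nonneg fun _ _ => t4n _ _ _ _ _)
          (Finset.mem_univ h)).trans
        (Finset.single_le_sum (f := fun b => ∑ h, ∑ i, ∑ x, t4 b h i x u)
          (fun _ _ => Finset.sum_nonneg fun _ _ => Finset.sum_nonneg fun _ _ =>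
            Finset.sum_nonneg fun _ _ => t4n _ _ _ _ _) (Finset.mem_univ b))))
      linarith
  have hβ0 : 0 ≤ β := by linarith
  have b2 : ∀ g h, ∑ u, t2 g h u ≤ X := by
    intro g h
    by_cases hc : ((Aset f B ε δ (Finset.univ.image g)).card : ℝ) ≤ (p : ℝ) ^ k / 2
    · simp only [t2, if_pos hc]
      refine sum_prod_le (im h) (ind0 _) hβ0 hβ1 hpk1 ?_ ((him h).trans (Nat.le_succ e))
      simp only [ind, Finset.sum_boole, Finset.mem_coe, Finset.filter_univ_mem]
      nlinarith
    · simp only [t2, if_neg hc, Finset.sum_const_zero]; exact hX0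
  have hcardsp : ∀ H : Submodule (ZMod p) V, ∑ v, ind H v = Fintype.card H := by
    intro H
    simp only [ind, Finset.sum_boole, SetLike.mem_coe]
    rw [Fintype.card_subtype]
  have b3 : ∀ b h, ∑ u, t3 b h u ≤ X := by
    intro b h
    by_cases hc : (Fintype.card (sp b) : ℝ) ≤ (p : ℝ) ^ k / 2
    · simp only [t3, if_pos hc]
      refine sum_prod_le (im h) (ind0 _) hβ0 hβ1 hpk1 ?_ ((him h).trans (Nat.le_succ e))
      rw [hcardsp]
      nlinarith
    · simp only [t3, if_neg hc, Finset.sum_const_zero]; exact hX0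
  have b4 : ∀ b h i x, ∑ u, t4 b h i x u ≤ X := by
    intro b h i x
    by_cases hc : (Fintype.card (sp b) : ℝ) ≤ (p : ℝ) ^ k ∧ ∃ y ∈ sp b, B x y ≠ 0
    · simp only [t4, if_pos hc]
      refine sum_prod_le (insert i (im h)) (G := fun v => ind (sp b) v * ‖chr f (B x v)‖)
        (fun v => mul_nonneg (ind0 _ _) (norm_nonneg _)) hβ0 hβ1 hpk1 ?_
        ((Finset.card_insert_le _ _).trans (by have := him h; omega))
      obtain ⟨hc, y, hy, hxy⟩ := hc
      have h3 := sum_norm_chr_fiber h0 h1 hα hα1 (sp b) (B x) hy hxy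
      have h4 : ∑ v, ind (sp b) v * ‖chr f (B x v)‖ = ∑ v : sp b, ‖chr f (B x v)‖ := by
        simp only [ind, ite_mul, one_mul, zero_mul]
        rw [← Finset.sum_filter]
        exact Finset.sum_subtype _ (by simp) _
      rw [h4]
      refine h3.trans ?_
      gcongr
    · simp only [t4, if_neg hc, Finset.sum_const_zero]; exact hX0
  have cV : ∀ m : ℕ, ((Finset.univ : Finset (Fin m → V)).card : ℝ) = N ^ m := by
    intro m; simp [hN, Finset.card_univ]
  have cn : ((Finset.univ : Finset (Fin e → Fin n)).card : ℝ) = (n : ℝ) ^ e := by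
    simp [Finset.card_univ]
  calc ∑ u : Fin n → V with ¬ ∀ i j, B (u i) (u j) = 0, wt f B u
      ≤ ∑ u : Fin n → V with ¬ ∀ i j, B (u i) (u j) = 0,
        (Y + (∑ g, ∑ h, t2 g h u + ∑ b, ∑ h, t3 b h u + ∑ b, ∑ h, ∑ i, ∑ x, t4 b h i x u)) :=
        Finset.sum_le_sum fun u hu => key u (by simpa using hu)
    _ ≤ ∑ u : Fin n → V,
        (Y + (∑ g, ∑ h, t2 g h u + ∑ b, ∑ h, t3 b h u + ∑ b, ∑ h, ∑ i, ∑ x, t4 b h i x u)) := by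
        refine Finset.sum_le_sum_of_subset_of_nonneg (Finset.filter_subset _ _) fun u _ _ => ?_
        have s2 : 0 ≤ ∑ g, ∑ h, t2 g h u :=
          Finset.sum_nonneg fun _ _ => Finset.sum_nonneg fun _ _ => t2n _ _ _
        have s3 : 0 ≤ ∑ g, ∑ h, t3 g h u :=
          Finset.sum_nonneg fun _ _ => Finset.sum_nonneg fun _ _ => t3n _ _ _
        have s4 : 0 ≤ ∑ b, ∑ h, ∑ i, ∑ x, t4 b h i x u :=
          Finset.sum_nonneg fun _ _ => Finset.sum_nonneg fun _ _ =>
            Finset.sum_nonneg fun _ _ => Finset.sum_nonneg fun _ _ => t4n _ _ _ _ _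
        positivity
    _ = N ^ n * Y + (∑ g, ∑ h, ∑ u, t2 g h u + ∑ b, ∑ h, ∑ u, t3 b h u +
          ∑ b, ∑ h, ∑ i, ∑ x, ∑ u, t4 b h i x u) := by
        rw [Finset.sum_add_distrib, Finset.sum_add_distrib, Finset.sum_add_distrib, Finset.sum_const,
          nsmul_eq_mul, cV]
        simp_rw [Finset.sum_comm (s := (Finset.univ : Finset (Fin n → V)))]
    _ ≤ N ^ n * Y + (∑ _g : Fin s → V, ∑ _h : Fin e → Fin n, X +
          ∑ _b : Fin (2 * k) → V, ∑ _h : Fin e → Fin n, X +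
          ∑ _b : Fin (2 * k) → V, ∑ _h : Fin e → Fin n, ∑ _i : Fin n, ∑ _x : V, X) := by
        gcongr
        · exact b2 _ _
        · exact b3 _ _
        · exact b4 _ _ _ _
    _ = N ^ n * Y + (N ^ s * (n ^ e * X) + N ^ (2 * k) * (n ^ e * X) +
          N ^ (2 * k) * (n ^ e * (n * (N * X)))) := by
        simp only [Finset.sum_const, nsmul_eq_mul, cV, cn]
        simp [hN, Finset.card_univ]
    _ ≤ _ := by
        have e1 : N ^ s ≤ N ^ (s + 2 * k + 1) := pow_le_pow_right₀ hN1 (by omega)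
        have e2 : N ^ (2 * k) ≤ N ^ (s + 2 * k + 1) := pow_le_pow_right₀ hN1 (by omega)
        have e3 : N ^ (2 * k) * N ≤ N ^ (s + 2 * k + 1) := by
          rw [← pow_succ]; exact pow_le_pow_right₀ hN1 (by omega)
        have e4 : (n : ℝ) ^ e ≤ n ^ (e + 1) := pow_le_pow_right₀ hn1 (by omega)
        have f1 : N ^ s * (n ^ e * X) ≤ N ^ (s + 2 * k + 1) * (n ^ (e + 1) * X) := by gcongr
        have f2 : N ^ (2 * k) * (n ^ e * X) ≤ N ^ (s + 2 * k + 1) * (n ^ (e + 1) * X) := by gcongr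
        have f3 : N ^ (2 * k) * (n ^ e * (n * (N * X))) ≤
            N ^ (s + 2 * k + 1) * (n ^ (e + 1) * X) := by
          calc _ = (N ^ (2 * k) * N) * (n ^ (e + 1) * X) := by ring
            _ ≤ _ := by gcongr
        linarith

end Sums

/-! ### The hyperbolic form and counting -/

section Counting
variable {p : ℕ} [Fact p.Prime]

/-- The hyperbolic symmetric bilinear form on `F^k × F^k`. -/
def hyp (p k : ℕ) :
    LinearMap.BilinForm (ZMod p) ((Fin k → ZMod p) × (Fin k → ZMod p)) :=
  LinearMap.mk₂ (ZMod p) (fun u v => u.1 ⬝ᵥ v.2 + u.2 ⬝ᵥ v.1)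
    (fun a b c => by simp only [Prod.fst_add, Prod.snd_add, add_dotProduct]; ring)
    (fun r a c => by simp only [Prod.smul_fst, Prod.smul_snd, smul_dotProduct, smul_add])
    (fun a b c => by simp only [Prod.fst_add, Prod.snd_add, dotProduct_add]; ring)
    (fun r a c => by simp only [Prod.smul_fst, Prod.smul_snd, dotProduct_smul, smul_add])

lemma hyp_apply {k : ℕ} (u v : (Fin k → ZMod p) × (Fin k → ZMod p)) :
    hyp p k u v = u.1 ⬝ᵥ v.2 + u.2 ⬝ᵥ v.1 := rfl

lemma hyp_isSymm (k : ℕ) : (hyp p k).IsSymm := ⟨fun u v => by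
  simp only [hyp_apply]
  rw [dotProduct_comm u.1, dotProduct_comm u.2, add_comm]⟩

lemma hyp_nondegenerate (k : ℕ) : (hyp p k).Nondegenerate := by
  have h : ∀ u, (∀ v, hyp p k u v = 0) → u = 0 := by
    intro u hu
    refine Prod.ext ?_ ?_
    · ext i
      simpa [hyp_apply] using hu (0, Pi.single i 1)
    · ext i
      simpa [hyp_apply] using hu (Pi.single i 1, 0)
  refine ⟨h, fun u hu => h u fun v => ?_⟩
  rw [← hu v]
  exact (hyp_isSymm k).eq u v

lemma hyp_finrank (k : ℕ) :
    Module.finrank (ZMod p) ((Fin k → ZMod p) × (Fin k → ZMod p)) = 2 * k := by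
  simp; ring

/-- The polynomial `∏_{i < k} (p^r - p^i)`: the number of linearly independent `k`-tuples in an
`r`-dimensional space. -/
def ek (p k r : ℕ) : ℝ := ∏ i ∈ Finset.range k, ((p : ℝ) ^ r - (p : ℝ) ^ i)

lemma ek_eq_zero {k r : ℕ} (h : r < k) : ek p k r = 0 :=
  Finset.prod_eq_zero (Finset.mem_range.mpr h) (by simp)

lemma card_li {V : Type*} [AddCommGroup V] [Module (ZMod p) V] [Finite V] (k : ℕ) :
    (Nat.card {s : Fin k → V // LinearIndependent (ZMod p) s} : ℝ) =
      ek p k (Module.finrank (ZMod p) V) := by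
  have := Fintype.ofFinite V
  rcases le_or_gt k (Module.finrank (ZMod p) V) with h | h
  · rw [card_linearIndependent h, ZMod.card, ek, Finset.prod_range]
    push_cast
    refine Finset.prod_congr rfl fun i _ => ?_
    rw [Nat.cast_sub (Nat.pow_le_pow_right (Fact.out : p.Prime).pos (by omega))]
    push_cast; rfl
  · rw [ek_eq_zero h]
    have : IsEmpty {s : Fin k → V // LinearIndependent (ZMod p) s} := ⟨fun s => by
      have := s.2.fintype_card_le_finrank
      simp at this
      omega⟩
    simp

/-- The linearly independent `k`-tuples annihilated by `S` are counted by the corank of `S`. -/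
lemma card_li_ker {n k : ℕ} (S : Matrix (Fin n) (Fin n) (ZMod p)) :
    (Nat.card {W : Fin k → Fin n → ZMod p //
      LinearIndependent (ZMod p) W ∧ ∀ l, S.mulVec (W l) = 0} : ℝ) = ek p k (n - S.rank) := by
  have hr : Module.finrank (ZMod p) (LinearMap.ker S.mulVecLin) = n - S.rank := by
    have := LinearMap.finrank_range_add_finrank_ker S.mulVecLin
    rw [Module.finrank_fin_fun] at this
    rw [Matrix.rank]; omega
  rw [← hr, ← card_li]
  congr 1
  refine Nat.card_congr
    { toFun := fun W => ⟨fun l => ⟨W.1 l, W.2.2 l⟩, ?_⟩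
      invFun := fun s => ⟨fun l => (s.1 l : Fin n → ZMod p), ?_, fun l => (s.1 l).2⟩
      left_inv := fun W => rfl
      right_inv := fun s => rfl }
  · refine LinearIndependent.of_comp (LinearMap.ker S.mulVecLin).subtype ?_
    exact W.2.1
  · exact s.2.map' (LinearMap.ker S.mulVecLin).subtype (Submodule.ker_subtype _)

lemma exists_right_inv {n k : ℕ} {W : Matrix (Fin k) (Fin n) (ZMod p)}
    (hW : LinearIndependent (ZMod p) W.row) : ∃ R : Matrix (Fin n) (Fin k) (ZMod p), W * R = 1 := by
  rw [← Matrix.mulVec_surjective_iff_exists_right_inverse]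
  have hrank : W.rank = k := by simpa using hW.rank_matrix
  have : LinearMap.range W.mulVecLin = ⊤ := by
    apply Submodule.eq_top_of_finrank_eq
    rw [Module.finrank_fin_fun]
    exact hrank
  exact LinearMap.range_eq_top.mp this

/-- Antisymmetric matrices are determined by their strictly upper triangular part. -/
lemma card_antisymm (hp : p ≠ 2) (k : ℕ) :
    Nat.card {A : Matrix (Fin k) (Fin k) (ZMod p) // A.transpose = -A} = p ^ (k * (k - 1) / 2) := by
  have h2 : (2 : ZMod p) ≠ 0 := by
    intro h
    have : (p : ℕ) ∣ 2 := (ZMod.natCast_eq_zero_iff 2 p).mp (by exact_mod_cast h)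
    rcases (Nat.dvd_prime Nat.prime_two).mp this with h | h
    · exact (Fact.out : p.Prime).one_lt.ne' h
    · exact hp h
  have e : {A : Matrix (Fin k) (Fin k) (ZMod p) // A.transpose = -A} ≃
      ({q : Fin k × Fin k // q.1 < q.2} → ZMod p) :=
    { toFun := fun A q => A.1 q.1.1 q.1.2
      invFun := fun c => ⟨Matrix.of fun i j => if h : i < j then c ⟨(i, j), h⟩ else
        if h : j < i then - c ⟨(j, i), h⟩ else 0, by
          ext i j
          rcases lt_trichotomy i j with h | h | h
          · simp [h, h.not_gt]
          · simp [h]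
          · simp [h, h.not_gt]⟩
      left_inv := by
        rintro ⟨A, hA⟩
        have hA' : ∀ i j, A j i = - A i j := fun i j => by
          have := congrFun (congrFun hA i) j
          simpa using this
        ext i j
        rcases lt_trichotomy i j with h | h | h
        · simp [h]
        · subst h
          have := hA' i i
          have h3 : (2 : ZMod p) * A i i = 0 := by linear_combination this
          simp [(mul_eq_zero.mp h3).resolve_left h2]
        · simp [h, h.not_gt, hA' j i]
      right_inv := by
        intro c
        ext ⟨⟨i, j⟩, h⟩
        simp only [Matrix.of_apply]
        rw [dif_pos h] }
  rw [Nat.card_congr e, Nat.card_fun, Nat.card_zmod, Nat.card_eq_fintype_card,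
    Fintype.card_subtype]
  congr 1
  have : (Finset.univ.filter fun q : Fin k × Fin k => q.1 < q.2).card =
      ∑ j : Fin k, (j : ℕ) := by
    rw [Finset.card_filter, Fintype.sum_prod_type_right]
    refine Finset.sum_congr rfl fun j _ => ?_
    rw [← Finset.card_filter, ← Fin.card_Iio j]
    congr 1
    ext i; simp
  rw [this, Fin.sum_univ_eq_sum_range (fun i => i), Finset.sum_range_id]

/-- For `W` of full rank, the solutions of `YᵀW + WᵀY = 0` are the `Y = A W` with `A`
antisymmetric. -/
lemma card_isotropic (hp : p ≠ 2) {n k : ℕ} {W : Matrix (Fin k) (Fin n) (ZMod p)}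
    (hW : LinearIndependent (ZMod p) W.row) :
    Nat.card {Y : Matrix (Fin k) (Fin n) (ZMod p) //
      Y.transpose * W + W.transpose * Y = 0} = p ^ (k * (k - 1) / 2) := by
  obtain ⟨R, hR⟩ := exists_right_inv hW
  rw [← card_antisymm hp k]
  have key : ∀ Y : Matrix (Fin k) (Fin n) (ZMod p), Y.transpose * W + W.transpose * Y = 0 →
      Y = -(Y * R).transpose * W := by
    intro Y h
    have h1 : Y.transpose = -(W.transpose * (Y * R)) := by
      have := congrArg (· * R) h
      simp only [Matrix.add_mul, Matrix.mul_assoc, hR, Matrix.mul_one, Matrix.zero_mul] at this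
      exact eq_neg_of_add_eq_zero_left this
    have h2 := congrArg Matrix.transpose h1
    rw [Matrix.transpose_transpose, Matrix.transpose_neg, Matrix.transpose_mul,
      Matrix.transpose_transpose] at h2
    rw [Matrix.neg_mul]
    exact h2
  refine Nat.card_congr
    { toFun := fun Y => ⟨Y.1 * R, ?_⟩
      invFun := fun A => ⟨A.1 * W, ?_⟩
      left_inv := ?_
      right_inv := ?_ }
  · have h2 := congrArg (· * R) (key Y.1 Y.2)
    simp only [Matrix.mul_assoc, hR, Matrix.mul_one] at h2
    exact (neg_eq_iff_eq_neg.mpr h2).symm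
  · rw [Matrix.transpose_mul, A.2, Matrix.mul_neg, Matrix.neg_mul, Matrix.mul_assoc]
    simp
  · rintro ⟨Y, hY⟩
    have h2 := congrArg (· * R) (key Y hY)
    simp only [Matrix.mul_assoc, hR, Matrix.mul_one] at h2
    simp only [Subtype.mk.injEq]
    rw [h2]
    exact (key Y hY).symm
  · rintro ⟨A, hA⟩
    simp [Matrix.mul_assoc, hR]

end Counting

/-! ### Moments of the corank as Fourier sums -/

section Moment
variable {p : ℕ} [Fact p.Prime] {f : ZMod p → ℝ}

/-- The symmetric matrix over `𝔽_p` with upper triangular part read off from `m`. -/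
def symF (n : ℕ) (m : Fin n × Fin n → ZMod p) : Matrix (Fin n) (Fin n) (ZMod p) :=
  Matrix.of fun i j => if i ≤ j then m (i, j) else m (j, i)

/-- The weight of an array of independent entries of law `f`. -/
def wm (f : ZMod p → ℝ) {n : ℕ} (m : Fin n × Fin n → ZMod p) : ℝ := ∏ q, f (m q)

/-- The coefficient of the entry `q` in the linear form `∑ l, Y l ⬝ᵥ (S *ᵥ W l)`. -/
def coef {n k : ℕ} (W Y : Fin k → Fin n → ZMod p) (q : Fin n × Fin n) : ZMod p :=
  if q.1 < q.2 then ∑ l, (Y l q.1 * W l q.2 + Y l q.2 * W l q.1)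
  else if q.1 = q.2 then ∑ l, Y l q.1 * W l q.2 else 0

lemma sum_pairing {n k : ℕ} (W Y : Fin k → Fin n → ZMod p) (m : Fin n × Fin n → ZMod p) :
    ∑ l, Y l ⬝ᵥ ((symF n m).mulVec (W l)) = ∑ q, coef W Y q * m q := by
  have h1 : ∑ l, Y l ⬝ᵥ ((symF n m).mulVec (W l)) =
      ∑ i, ∑ j, symF n m i j * ∑ l, Y l i * W l j := by
    simp only [dotProduct, Matrix.mulVec, Finset.mul_sum]
    rw [Finset.sum_comm]
    refine Finset.sum_congr rfl fun i _ => ?_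
    rw [Finset.sum_comm]
    refine Finset.sum_congr rfl fun j _ => Finset.sum_congr rfl fun l _ => ?_
    ring
  set c : Fin n → Fin n → ZMod p := fun i j => ∑ l, Y l i * W l j with hc
  have h2 : ∀ i j, symF n m i j * c i j = (if i < j then m (i, j) * c i j else 0) +
      (if j < i then m (j, i) * c i j else 0) + (if i = j then m (i, j) * c i j else 0) := by
    intro i j
    rcases lt_trichotomy i j with h | h | h
    · simp [symF, h, h.le, h.not_gt, h.ne]
    · simp [symF, h]
    · simp [symF, h, h.not_ge, h.not_gt, h.ne']
  rw [h1, Fintype.sum_prod_type]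
  change ∑ i, ∑ j, symF n m i j * c i j = _
  simp_rw [h2, Finset.sum_add_distrib]
  rw [Finset.sum_comm (f := fun i j => if j < i then m (j, i) * c i j else 0)]
  simp_rw [← Finset.sum_add_distrib]
  refine Finset.sum_congr rfl fun i _ => Finset.sum_congr rfl fun j _ => ?_
  rcases lt_trichotomy i j with h | h | h
  · simp only [coef, h, if_true, h.ne, if_false, hc, Finset.sum_add_distrib]
    ring
  · simp [coef, h, hc]; ring
  · simp [coef, h.not_gt, h.ne']

lemma std_sum {ι : Type*} (s : Finset ι) (g : ι → ZMod p) :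
    (ZMod.stdAddChar (∑ i ∈ s, g i) : ℂ) = ∏ i ∈ s, (ZMod.stdAddChar (g i) : ℂ) := by
  classical
  induction s using Finset.induction_on with
  | empty => simp
  | insert a s ha ih => rw [Finset.sum_insert ha, Finset.prod_insert ha, AddChar.map_add_eq_mul, ih]

lemma char_prod {n : ℕ} (c : Fin n × Fin n → ZMod p) :
    ∑ m : Fin n × Fin n → ZMod p, (wm f m : ℂ) * ZMod.stdAddChar (∑ q, c q * m q) =
      ∏ q, chr f (c q) := by
  simp only [chr]
  have h := Finset.prod_univ_sum (fun _ : Fin n × Fin n => (Finset.univ : Finset (ZMod p)))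
    (fun q a => (f a : ℂ) * (ZMod.stdAddChar (c q * a) : ℂ))
  rw [Fintype.piFinset_univ] at h
  rw [h]
  refine Finset.sum_congr rfl fun m _ => ?_
  rw [Finset.prod_mul_distrib, wm, Complex.ofReal_prod]
  congr 1
  exact std_sum _ _

open scoped Classical in
lemma sum_orthogonality {n k : ℕ} (x : Fin k → Fin n → ZMod p) :
    ∑ Y : Fin k → Fin n → ZMod p, (ZMod.stdAddChar (∑ l, Y l ⬝ᵥ x l) : ℂ) =
      if ∀ l, x l = 0 then (p : ℂ) ^ (n * k) else 0 := by
  have h1 : ∀ l, ∑ y : Fin n → ZMod p, (ZMod.stdAddChar (y ⬝ᵥ x l) : ℂ) =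
      if x l = 0 then (p : ℂ) ^ n else 0 := by
    intro l
    have h := Finset.prod_univ_sum (fun _ : Fin n => (Finset.univ : Finset (ZMod p)))
      (fun i a => (ZMod.stdAddChar (a * x l i) : ℂ))
    rw [Fintype.piFinset_univ] at h
    simp only [dotProduct, std_sum]
    rw [← h]
    simp only [sum_std_mul]
    split_ifs with hx
    · simp [hx]
    · obtain ⟨i, hi⟩ := Function.ne_iff.mp hx
      exact Finset.prod_eq_zero (Finset.mem_univ i) (if_neg hi)
  have h := Finset.prod_univ_sum (fun _ : Fin k => (Finset.univ : Finset (Fin n → ZMod p)))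
    (fun l y => (ZMod.stdAddChar (y ⬝ᵥ x l) : ℂ))
  rw [Fintype.piFinset_univ] at h
  simp only [std_sum]
  rw [← h]
  simp only [h1]
  split_ifs with hx
  · simp [hx, pow_mul]
  · push Not at hx
    obtain ⟨l, hl⟩ := hx
    exact Finset.prod_eq_zero (Finset.mem_univ l) (if_neg hl)

open scoped Classical in
/-- Fourier expansion of the probability that the random symmetric matrix kills every `W l`. -/
lemma prob_annihilate {n k : ℕ} (W : Fin k → Fin n → ZMod p) :
    (p : ℂ) ^ (n * k) * ∑ m : Fin n × Fin n → ZMod p,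
      (wm f m : ℂ) * (if ∀ l, (symF n m).mulVec (W l) = 0 then 1 else 0) =
      ∑ Y : Fin k → Fin n → ZMod p, ∏ q, chr f (coef W Y q) := by
  simp_rw [← char_prod, ← sum_pairing]
  rw [Finset.sum_comm, Finset.mul_sum]
  refine Finset.sum_congr rfl fun m _ => ?_
  rw [← Finset.mul_sum, sum_orthogonality]
  split_ifs <;> ring

/-- Regroups a pair of `k`-tuples of vectors of length `n` by coordinates. -/
def regroup (p n k : ℕ) : ((Fin k → Fin n → ZMod p) × (Fin k → Fin n → ZMod p)) ≃
    (Fin n → (Fin k → ZMod p) × (Fin k → ZMod p)) where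
  toFun x i := (fun l => x.2 l i, fun l => x.1 l i)
  invFun u := (fun l i => (u i).2 l, fun l i => (u i).1 l)
  left_inv _ := rfl
  right_inv _ := rfl

lemma hyp_regroup {n k : ℕ} (W Y : Fin k → Fin n → ZMod p) (i j : Fin n) :
    hyp p k (regroup p n k (W, Y) i) (regroup p n k (W, Y) j) =
      ∑ l, (Y l i * W l j + Y l j * W l i) := by
  simp only [hyp_apply, regroup, Equiv.coe_fn_mk, dotProduct, Finset.sum_add_distrib]
  congr 1
  exact Finset.sum_congr rfl fun l _ => mul_comm _ _

lemma coef_eq_zero (hp : p ≠ 2) {n k : ℕ} {W Y : Fin k → Fin n → ZMod p}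
    (h : ∀ i j, hyp p k (regroup p n k (W, Y) i) (regroup p n k (W, Y) j) = 0)
    (q : Fin n × Fin n) : coef W Y q = 0 := by
  have h2 : (2 : ZMod p) ≠ 0 := by
    intro h
    have : (p : ℕ) ∣ 2 := (ZMod.natCast_eq_zero_iff 2 p).mp (by exact_mod_cast h)
    rcases (Nat.dvd_prime Nat.prime_two).mp this with h | h
    · exact (Fact.out : p.Prime).one_lt.ne' h
    · exact hp h
  simp only [hyp_regroup] at h
  rw [coef]
  split_ifs with h3 h4
  · exact h _ _
  · have := h q.1 q.2
    rw [← h4] at this ⊢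
    simp_rw [← two_mul] at this
    rw [← Finset.mul_sum] at this
    exact (mul_eq_zero.mp this).resolve_left h2
  · rfl

/-- The diagonal factors are dropped, being at most `1`. -/
lemma norm_prod_coef_le (h0 : ∀ a, 0 ≤ f a) (h1 : ∑ a, f a = 1) {n k : ℕ}
    (W Y : Fin k → Fin n → ZMod p) :
    ‖∏ q, chr f (coef W Y q)‖ ≤ wt f (hyp p k) (regroup p n k (W, Y)) := by
  rw [norm_prod, Fintype.prod_prod_type, wt]
  refine Finset.prod_le_prod (fun _ _ => Finset.prod_nonneg fun _ _ => norm_nonneg _) fun i _ =>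
    Finset.prod_le_prod (fun _ _ => norm_nonneg _) fun j _ => ?_
  split_ifs with h
  · rw [hyp_regroup, coef, if_pos h]
  · exact norm_chr_le_one h0 h1 _

open scoped Classical in
lemma card_isotropic_regroup (hp : p ≠ 2) {n k : ℕ} {W : Fin k → Fin n → ZMod p}
    (hW : LinearIndependent (ZMod p) W) :
    (Finset.univ.filter fun Y : Fin k → Fin n → ZMod p =>
      ∀ i j, hyp p k (regroup p n k (W, Y) i) (regroup p n k (W, Y) j) = 0).card =
      p ^ (k * (k - 1) / 2) := by
  rw [← card_isotropic hp (W := Matrix.of W) hW, ← Fintype.card_subtype, ← Nat.card_eq_fintype_card]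
  refine Nat.card_congr (Equiv.subtypeEquiv Matrix.of fun Y => ?_)
  rw [← Matrix.ext_iff]
  simp only [hyp_regroup]
  refine forall_congr' fun i => forall_congr' fun j => ?_
  simp only [Matrix.add_apply, Matrix.mul_apply, Matrix.transpose_apply, Matrix.of_apply,
    Matrix.zero_apply, ← Finset.sum_add_distrib]
  simp only [mul_comm]

open scoped Classical in
/-- The `k`-th moment of the corank, compared with the contribution of the isotropic tuples. -/
lemma moment_error (hp : p ≠ 2) (h0 : ∀ a, 0 ≤ f a) (h1 : ∑ a, f a = 1) (n k : ℕ) :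
    |(p : ℝ) ^ (n * k) * ∑ m : Fin n × Fin n → ZMod p, wm f m * ek p k (n - (symF n m).rank) -
      ek p k n * (p : ℝ) ^ (k * (k - 1) / 2)| ≤
      ∑ u : Fin n → (Fin k → ZMod p) × (Fin k → ZMod p)
        with ¬ ∀ i j, hyp p k (u i) (u j) = 0, wt f (hyp p k) u := by
  set LI : Finset (Fin k → Fin n → ZMod p) :=
    Finset.univ.filter fun W => LinearIndependent (ZMod p) W with hLI
  set iso : (Fin k → Fin n → ZMod p) → (Fin k → Fin n → ZMod p) → Prop := fun W Y =>
    ∀ i j, hyp p k (regroup p n k (W, Y) i) (regroup p n k (W, Y) j) = 0 with hiso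
  have hcard : (LI.card : ℝ) = ek p k n := by
    have := card_li (p := p) (V := Fin n → ZMod p) k
    rw [Module.finrank_fin_fun, Nat.card_eq_fintype_card, Fintype.card_subtype] at this
    exact this
  have hek : ∀ m : Fin n × Fin n → ZMod p, (ek p k (n - (symF n m).rank) : ℂ) =
      ∑ W ∈ LI, if ∀ l, (symF n m).mulVec (W l) = 0 then (1 : ℂ) else 0 := by
    intro m
    rw [← card_li_ker, Nat.card_eq_fintype_card, Fintype.card_subtype, Finset.sum_boole, hLI,
      Finset.filter_filter]
    simp
  have hmain : (((p : ℝ) ^ (n * k) * ∑ m : Fin n × Fin n → ZMod p,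
      wm f m * ek p k (n - (symF n m).rank) : ℝ) : ℂ) =
      ∑ W ∈ LI, ∑ Y : Fin k → Fin n → ZMod p, ∏ q, chr f (coef W Y q) := by
    simp_rw [← prob_annihilate]
    push_cast
    simp_rw [hek, Finset.mul_sum]
    rw [Finset.sum_comm]
  have hsplit : ∀ W ∈ LI, ∑ Y : Fin k → Fin n → ZMod p, ∏ q, chr f (coef W Y q) =
      (p : ℂ) ^ (k * (k - 1) / 2) + ∑ Y with ¬ iso W Y, ∏ q, chr f (coef W Y q) := by
    intro W hW
    rw [← Finset.sum_filter_add_sum_filter_not Finset.univ (fun Y => iso W Y)]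
    congr 1
    rw [Finset.sum_congr rfl (g := fun _ => (1 : ℂ)), Finset.sum_const, nsmul_eq_mul, mul_one,
      card_isotropic_regroup hp (by simpa [hLI] using hW)]
    · push_cast; rfl
    · intro Y hY
      refine Finset.prod_eq_one fun q _ => ?_
      rw [coef_eq_zero hp (by simpa [hiso] using hY) q, chr_zero h1]
  rw [Finset.sum_congr rfl hsplit, Finset.sum_add_distrib, Finset.sum_const, nsmul_eq_mul] at hmain
  have hdiff : (((p : ℝ) ^ (n * k) * ∑ m : Fin n × Fin n → ZMod p,
      wm f m * ek p k (n - (symF n m).rank) - ek p k n * (p : ℝ) ^ (k * (k - 1) / 2) : ℝ) : ℂ) =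
      ∑ W ∈ LI, ∑ Y with ¬ iso W Y, ∏ q, chr f (coef W Y q) := by
    rw [Complex.ofReal_sub, hmain, ← hcard]
    push_cast
    ring
  rw [← Real.norm_eq_abs, ← Complex.norm_real, hdiff]
  calc ‖∑ W ∈ LI, ∑ Y with ¬ iso W Y, ∏ q, chr f (coef W Y q)‖
      ≤ ∑ W ∈ LI, ∑ Y with ¬ iso W Y, wt f (hyp p k) (regroup p n k (W, Y)) := by
        refine (norm_sum_le _ _).trans (Finset.sum_le_sum fun W _ => ?_)
        exact (norm_sum_le _ _).trans (Finset.sum_le_sum fun Y _ => norm_prod_coef_le h0 h1 W Y)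
    _ ≤ ∑ W, ∑ Y with ¬ iso W Y, wt f (hyp p k) (regroup p n k (W, Y)) :=
        Finset.sum_le_sum_of_subset_of_nonneg (Finset.subset_univ _) fun W _ _ =>
          Finset.sum_nonneg fun Y _ => wt_nonneg _
    _ = _ := by
        simp_rw [Finset.sum_filter]
        rw [← Fintype.sum_prod_type'
          (f := fun W Y => if ¬ iso W Y then wt f (hyp p k) (regroup p n k (W, Y)) else 0)]
        exact Fintype.sum_equiv (regroup p n k) _ _ fun x => rfl

end Moment

/-! ### Moments of the limiting law -/

section Limit
open Topology
variable {p : ℕ}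

/-- The unnormalised limiting weights. -/
def nu (p r : ℕ) : ℝ := (∏ i ∈ Finset.Icc 1 r, ((p : ℝ) ^ i - 1))⁻¹

lemma pow_sub_one_ge (hp : 3 ≤ p) {i : ℕ} (hi : 1 ≤ i) : (2 : ℝ) ≤ (p : ℝ) ^ i - 1 := by
  have h3 : (3 : ℝ) ≤ p := by exact_mod_cast hp
  have : (p : ℝ) ^ 1 ≤ (p : ℝ) ^ i := pow_le_pow_right₀ (by linarith) hi
  rw [pow_one] at this
  linarith

lemma nu_succ (hp : 3 ≤ p) (r : ℕ) : nu p (r + 1) * ((p : ℝ) ^ (r + 1) - 1) = nu p r := by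
  have := pow_sub_one_ge hp (show 1 ≤ r + 1 by omega)
  rw [nu, nu, Finset.prod_Icc_succ_top (by omega), mul_inv, mul_assoc,
    inv_mul_cancel₀ (by linarith), mul_one]

lemma nu_pos (hp : 3 ≤ p) (r : ℕ) : 0 < nu p r :=
  inv_pos.mpr (Finset.prod_pos fun i hi => by
    have := pow_sub_one_ge hp (Finset.mem_Icc.mp hi).1; linarith)

lemma nu_le (hp : 3 ≤ p) (r : ℕ) : nu p r ≤ (1 / 2) ^ r := by
  induction r with
  | zero => simp [nu]
  | succ r ih =>
    have h1 := nu_succ hp r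
    have h2 := pow_sub_one_ge hp (show 1 ≤ r + 1 by omega)
    have h3 := nu_pos hp (r + 1)
    rw [pow_succ]
    nlinarith

lemma summable_nu (hp : 3 ≤ p) : Summable (nu p) :=
  Summable.of_nonneg_of_le (fun r => (nu_pos hp r).le) (nu_le hp)
    (summable_geometric_of_lt_one (by norm_num) (by norm_num))

/-- The generating function of the weights. -/
def gnu (p : ℕ) (z : ℝ) : ℝ := ∑' r, nu p r * z ^ r

lemma summable_gnu (hp : 3 ≤ p) {z : ℝ} (hz0 : 0 ≤ z) (hz1 : z ≤ 1) :
    Summable fun r => nu p r * z ^ r :=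
  Summable.of_nonneg_of_le (fun r => mul_nonneg (nu_pos hp r).le (pow_nonneg hz0 r))
    (fun r => mul_le_of_le_one_right (nu_pos hp r).le (pow_le_one₀ hz0 hz1)) (summable_nu hp)

/-- The functional equation `g(z) = (1 + z / p) g(z / p)` of the generating function. -/
lemma gnu_eq (hp : 3 ≤ p) {z : ℝ} (hz0 : 0 ≤ z) (hz1 : z ≤ 1) :
    gnu p z = (1 + z * (p : ℝ)⁻¹) * gnu p (z * (p : ℝ)⁻¹) := by
  have h3 : (3 : ℝ) ≤ p := by exact_mod_cast hp
  have hq : (p : ℝ)⁻¹ ≤ 1 := inv_le_one_of_one_le₀ (by linarith)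
  have hw0 : 0 ≤ z * (p : ℝ)⁻¹ := by positivity
  have hw1 : z * (p : ℝ)⁻¹ ≤ 1 := mul_le_one₀ hz1 (by positivity) hq
  have s1 := summable_gnu hp hz0 hz1
  have s2 := summable_gnu hp hw0 hw1
  have hd : gnu p z - gnu p (z * (p : ℝ)⁻¹) = z * (p : ℝ)⁻¹ * gnu p (z * (p : ℝ)⁻¹) := by
    rw [gnu, gnu, ← s1.tsum_sub s2, ← tsum_mul_left, (s1.sub s2).tsum_eq_zero_add]
    simp only [pow_zero, mul_one, sub_self, zero_add]
    refine tsum_congr fun r => ?_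
    have hi : (p : ℝ)⁻¹ ^ (r + 1) * (p : ℝ) ^ (r + 1) = 1 := by
      rw [← mul_pow, inv_mul_cancel₀ (by linarith), one_pow]
    rw [← nu_succ hp r]
    simp only [mul_pow]
    linear_combination (-(nu p (r + 1) * z ^ (r + 1))) * hi
  linarith

lemma gnu_one (hp : 3 ≤ p) (N : ℕ) :
    gnu p 1 = (∏ i ∈ Finset.range N, (1 + (p : ℝ)⁻¹ ^ (i + 1))) * gnu p ((p : ℝ)⁻¹ ^ N) := by
  have h3 : (3 : ℝ) ≤ p := by exact_mod_cast hp
  have hq : (p : ℝ)⁻¹ ≤ 1 := inv_le_one_of_one_le₀ (by linarith)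
  induction N with
  | zero => simp
  | succ N ih =>
    rw [ih, gnu_eq hp (by positivity) (pow_le_one₀ (by positivity) hq), ← pow_succ,
      Finset.prod_range_succ]
    ring

lemma tendsto_gnu (hp : 3 ≤ p) : Tendsto (fun N : ℕ => gnu p ((p : ℝ)⁻¹ ^ N)) atTop (𝓝 1) := by
  have h3 : (3 : ℝ) ≤ p := by exact_mod_cast hp
  have hq : (p : ℝ)⁻¹ < 1 := inv_lt_one_of_one_lt₀ (by linarith)
  have hb : ∀ N : ℕ, |gnu p ((p : ℝ)⁻¹ ^ N) - 1| ≤ (p : ℝ)⁻¹ ^ N * ∑' r, nu p (r + 1) := by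
    intro N
    set z := (p : ℝ)⁻¹ ^ N with hz
    have hz0 : 0 ≤ z := by positivity
    have hz1 : z ≤ 1 := pow_le_one₀ (by positivity) hq.le
    have s := summable_gnu hp hz0 hz1
    have s' : Summable fun r => nu p (r + 1) * z ^ (r + 1) := (summable_nat_add_iff 1).mpr s
    have sn : Summable fun r => nu p (r + 1) := (summable_nat_add_iff 1).mpr (summable_nu hp)
    have : gnu p z - 1 = ∑' r, nu p (r + 1) * z ^ (r + 1) := by
      rw [gnu, s.tsum_eq_zero_add]; simp [nu]
    rw [this, abs_of_nonneg (tsum_nonneg fun r => mul_nonneg (nu_pos hp _).le (by positivity)),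
      ← tsum_mul_left]
    refine s'.tsum_le_tsum (fun r => ?_) (sn.mul_left z)
    rw [pow_succ']
    have := nu_pos hp (r + 1)
    have h4 : z ^ r ≤ 1 := pow_le_one₀ hz0 hz1
    nlinarith [mul_nonneg hz0 this.le]
  rw [tendsto_iff_dist_tendsto_zero]
  refine squeeze_zero (g := fun N => (p : ℝ)⁻¹ ^ N * ∑' r, nu p (r + 1))
    (fun _ => dist_nonneg) hb ?_
  have := (tendsto_pow_atTop_nhds_zero_of_lt_one (r := (p : ℝ)⁻¹) (by positivity) hq).mul_const
    (∑' r, nu p (r + 1))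
  simpa using this

/-- The finite products `∏ (1 - q^i)` converge to a positive limit. -/
lemma tendsto_euler (hp : 3 ≤ p) : ∃ L : ℝ, 0 < L ∧
    Tendsto (fun N => ∏ i ∈ Finset.range N, (1 - (p : ℝ)⁻¹ ^ (i + 1))) atTop (𝓝 L) := by
  have h3 : (3 : ℝ) ≤ p := by exact_mod_cast hp
  have hq0 : 0 < (p : ℝ)⁻¹ := by positivity
  have hq : (p : ℝ)⁻¹ ≤ 1 / 3 := by
    rw [inv_le_comm₀ (by linarith) (by norm_num)]; linarith
  set q := (p : ℝ)⁻¹ with hqdef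
  set C : ℕ → ℝ := fun N => ∏ i ∈ Finset.range N, (1 - q ^ (i + 1)) with hC
  have hlow : ∀ N, 1 / 2 + q ^ N / 2 ≤ C N := by
    intro N
    induction N with
    | zero => simp [hC]; norm_num
    | succ N ih =>
      have e : C (N + 1) = C N * (1 - q ^ (N + 1)) := by
        simp only [hC]; rw [Finset.prod_range_succ]
      rw [e]
      have h4 : 0 ≤ q ^ N := by positivity
      have h5 : q ^ N ≤ 1 := pow_le_one₀ hq0.le (by linarith)
      have h6 : q ^ (N + 1) ≤ q ^ N / 3 := by rw [pow_succ]; nlinarith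
      have h7 : 0 ≤ q ^ (N + 1) := by positivity
      nlinarith [mul_le_mul_of_nonneg_right ih (show 0 ≤ 1 - q ^ (N + 1) by linarith),
        mul_nonneg h4 h7, mul_le_of_le_one_right h7 h5]
  have hanti : Antitone C := antitone_nat_of_succ_le fun N => by
    have e : C (N + 1) = C N * (1 - q ^ (N + 1)) := by
      simp only [hC]; rw [Finset.prod_range_succ]
    rw [e]
    have h4 : 0 ≤ q ^ N := by positivity
    have h7 : 0 ≤ q ^ (N + 1) := by positivity
    have := hlow N
    nlinarith
  have hlow' : ∀ N, 1 / 2 ≤ C N := fun N => le_trans (by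
    have : 0 ≤ q ^ N := by positivity
    linarith) (hlow N)
  have ht := tendsto_atTop_ciInf hanti ⟨1 / 2, by rintro _ ⟨N, rfl⟩; exact hlow' N⟩
  exact ⟨_, lt_of_lt_of_le (by norm_num) (le_ciInf hlow'), ht⟩

/-- Finite form of the Euler identity `∏ (1 + q^i) ∏ (1 - q^{2i-1}) = 1`. -/
lemma euler_identity (q : ℝ) (N : ℕ) :
    (∏ i ∈ Finset.range N, (1 + q ^ (i + 1))) * (∏ i ∈ Finset.range N, (1 - q ^ (2 * i + 1))) *
      ∏ i ∈ Finset.range N, (1 - q ^ (i + 1)) = ∏ i ∈ Finset.range (2 * N), (1 - q ^ (i + 1)) := by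
  induction N with
  | zero => simp
  | succ N ih =>
    rw [show 2 * (N + 1) = 2 * N + 1 + 1 by ring]
    simp only [Finset.prod_range_succ]
    rw [← ih]
    ring

/-- `muSym` has total mass one. The functional equation gives `∑ ν = ∏ (1 + p^{-i})`. -/
lemma tsum_nu (hp : 3 ≤ p) :
    (∏' i : ℕ, (1 - (p : ℝ) ^ (-(2 * (i : ℤ) + 1)))) * ∑' r, nu p r = 1 := by
  have h3 : (3 : ℝ) ≤ p := by exact_mod_cast hp
  have hq0 : 0 < (p : ℝ)⁻¹ := by positivity
  have hq : (p : ℝ)⁻¹ < 1 := inv_lt_one_of_one_lt₀ (by linarith)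
  set q := (p : ℝ)⁻¹ with hqdef
  have hz : ∀ i : ℕ, (p : ℝ) ^ (-(2 * (i : ℤ) + 1)) = q ^ (2 * i + 1) := by
    intro i
    rw [hqdef, inv_pow, zpow_neg, ← zpow_natCast]
    push_cast; rfl
  simp_rw [hz]
  have hs : Summable fun i : ℕ => q ^ (2 * i + 1) :=
    (summable_geometric_of_lt_one hq0.le hq).comp_injective
      (i := fun i : ℕ => 2 * i + 1) (fun a b h => by simpa using h)
  have hm : Multipliable fun i : ℕ => 1 - q ^ (2 * i + 1) := by
    have := Real.multipliable_one_add_of_summable (f := fun i : ℕ => - q ^ (2 * i + 1)) hs.neg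
    simpa [sub_eq_add_neg] using this
  have hO := hm.hasProd.tendsto_prod_nat
  obtain ⟨L, hL, hC⟩ := tendsto_euler hp
  have hC2 : Tendsto (fun N => ∏ i ∈ Finset.range (2 * N), (1 - q ^ (i + 1))) atTop (𝓝 L) :=
    hC.comp (tendsto_id.const_mul_atTop' (by norm_num : 0 < 2))
  have hF : (∑' r, nu p r) = gnu p 1 := by simp [gnu]
  have t1 := ((hO.mul_const (gnu p 1)).mul hC)
  have t2 := hC2.mul (tendsto_gnu hp)
  have heq : ∀ N, (∏ i ∈ Finset.range N, (1 - q ^ (2 * i + 1))) * gnu p 1 *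
      ∏ i ∈ Finset.range N, (1 - q ^ (i + 1)) =
      (∏ i ∈ Finset.range (2 * N), (1 - q ^ (i + 1))) * gnu p (q ^ N) := by
    intro N
    rw [gnu_one hp N, ← euler_identity]
    ring
  have := tendsto_nhds_unique (t1.congr heq) t2
  rw [hF]
  exact mul_right_cancel₀ hL.ne' (by rw [this]; ring)

lemma ek_succ_succ (k r : ℕ) :
    ek p (k + 1) (r + 1) = ((p : ℝ) ^ (r + 1) - 1) * ((p : ℝ) ^ k * ek p k r) := by
  rw [ek, Finset.prod_range_succ', ek, pow_zero, mul_comm]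
  congr 1
  rw [← Finset.card_range k, ← Finset.prod_const, Finset.card_range, ← Finset.prod_mul_distrib]
  refine Finset.prod_congr rfl fun i _ => ?_
  ring

lemma muSym_eq (p r : ℕ) :
    muSym p r = (∏' i : ℕ, (1 - (p : ℝ) ^ (-(2 * (i : ℤ) + 1)))) * nu p r := rfl

lemma muSym_nonneg (hp : 3 ≤ p) (r : ℕ) : 0 ≤ muSym p r := by
  have h := tsum_nu hp
  have hpos : 0 < ∑' r, nu p r := (summable_nu hp).tsum_pos (fun r => (nu_pos hp r).le) 0 (nu_pos hp 0)
  rw [muSym_eq]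
  refine mul_nonneg ?_ (nu_pos hp r).le
  by_contra hc
  nlinarith

/-- The moments of the limiting law. -/
lemma hasSum_muSym (hp : 3 ≤ p) (k : ℕ) :
    HasSum (fun r => muSym p r * ek p k r) ((p : ℝ) ^ (k * (k - 1) / 2)) := by
  induction k with
  | zero =>
    have h := (summable_nu hp).hasSum.mul_left (∏' i : ℕ, (1 - (p : ℝ) ^ (-(2 * (i : ℤ) + 1))))
    rw [tsum_nu hp] at h
    simpa [muSym_eq, ek] using h
  | succ k ih =>
    have hexp : (k + 1) * (k + 1 - 1) / 2 = k * (k - 1) / 2 + k := by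
      rw [Nat.add_sub_cancel, ← Finset.sum_range_id, ← Finset.sum_range_succ,
        Finset.sum_range_id]
      rfl
    have h3 : HasSum (fun r => muSym p (r + 1) * ek p (k + 1) (r + 1))
        ((p : ℝ) ^ (k * (k - 1) / 2) * (p : ℝ) ^ k) := by
      have : (fun r => muSym p (r + 1) * ek p (k + 1) (r + 1)) =
          fun r => muSym p r * ek p k r * (p : ℝ) ^ k := by
        funext r
        rw [ek_succ_succ, muSym_eq, muSym_eq, ← nu_succ hp r]
        ring
      rw [this]
      exact ih.mul_right _
    rw [hexp, pow_add]
    refine (hasSum_nat_add_iff' 1).mp ?_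
    have h0 : ek p (k + 1) 0 = 0 := by simp [ek, Finset.prod_range_succ']
    rw [Finset.sum_range_one, h0, mul_zero, sub_zero]
    exact h3

end Limit

/-! ### From moments to the `ℓ¹` distance -/

section Inversion
variable {p : ℕ}

lemma ek_nonneg (hp : 3 ≤ p) (k r : ℕ) : 0 ≤ ek p k r := by
  have h3 : (1 : ℝ) ≤ p := by exact_mod_cast (by omega : 1 ≤ p)
  by_cases h : r < k
  · exact (Finset.prod_eq_zero (Finset.mem_range.mpr h) (sub_self _)).ge
  · refine Finset.prod_nonneg fun i hi => ?_
    have := pow_le_pow_right₀ h3 (by have := Finset.mem_range.mp hi; omega : i ≤ r)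
    linarith

/-- The Lagrange-type product `∏_{j ∈ S} (p^r - p^j)`. -/
def lag (p : ℕ) (S : Finset ℕ) (r : ℕ) : ℝ := ∏ j ∈ S, ((p : ℝ) ^ r - (p : ℝ) ^ j)

/-- A signed sequence whose moments `∑ d r * e_k(r)` are at most `δ` is small against every
product `lag p S`, because `(X - p^j) e_i = e_{i+1} + (p^i - p^j) e_i`. -/
lemma lag_bound (hp : 3 ≤ p) {d : ℕ → ℝ} {δ : ℝ} {K : ℕ}
    (hs : ∀ k ≤ K, Summable fun r => d r * ek p k r)
    (hd : ∀ k ≤ K, |∑' r, d r * ek p k r| ≤ δ) (S : Finset ℕ) (hS : ∀ j ∈ S, j ≤ K) :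
    ∀ i, i + S.card ≤ K → (Summable fun r => d r * (ek p i r * lag p S r)) ∧
      |∑' r, d r * (ek p i r * lag p S r)| ≤ δ * (1 + (p : ℝ) ^ K) ^ S.card := by
  have h3 : (1 : ℝ) ≤ p := by exact_mod_cast (by omega : 1 ≤ p)
  induction S using Finset.induction_on with
  | empty =>
    intro i hi
    simp only [lag, Finset.prod_empty, mul_one, Finset.card_empty, pow_zero]
    exact ⟨hs i (by simpa using hi), hd i (by simpa using hi)⟩
  | insert j S hj ih =>
    intro i hi
    have hS' : ∀ j ∈ S, j ≤ K := fun a ha => hS a (Finset.mem_insert_of_mem ha)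
    rw [Finset.card_insert_of_notMem hj] at hi ⊢
    obtain ⟨s1, b1⟩ := ih hS' i (by omega)
    obtain ⟨s2, b2⟩ := ih hS' (i + 1) (by omega)
    have hfun : (fun r => d r * (ek p i r * lag p (insert j S) r)) =
        fun r => d r * (ek p (i + 1) r * lag p S r) +
          ((p : ℝ) ^ i - (p : ℝ) ^ j) * (d r * (ek p i r * lag p S r)) := by
      funext r
      rw [lag, Finset.prod_insert hj, ← lag, ek, ek, Finset.prod_range_succ]
      ring
    have s3 := s1.mul_left ((p : ℝ) ^ i - (p : ℝ) ^ j)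
    rw [hfun]
    refine ⟨s2.add s3, ?_⟩
    rw [s2.tsum_add s3, tsum_mul_left]
    refine (abs_add_le _ _).trans ?_
    rw [abs_mul]
    have hij : |(p : ℝ) ^ i - (p : ℝ) ^ j| ≤ (p : ℝ) ^ K := by
      have a1 := pow_le_pow_right₀ h3 (by omega : i ≤ K)
      have a2 := pow_le_pow_right₀ h3 (hS j (Finset.mem_insert_self _ _))
      have a3 : (0 : ℝ) ≤ (p : ℝ) ^ i := by positivity
      have a4 : (0 : ℝ) ≤ (p : ℝ) ^ j := by positivity
      rw [abs_le]; constructor <;> linarith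
    have := mul_le_mul hij b1 (abs_nonneg _) (by positivity)
    rw [pow_succ]
    linarith

lemma sub_pow_ge (hp : 3 ≤ p) {a b : ℕ} (h : a < b) :
    (p : ℝ) ^ a * ((p : ℝ) - 1) ≤ (p : ℝ) ^ b - (p : ℝ) ^ a := by
  have h3 : (1 : ℝ) ≤ p := by exact_mod_cast (by omega : 1 ≤ p)
  have := pow_le_pow_right₀ h3 (by omega : a + 1 ≤ b)
  rw [pow_succ] at this
  linarith

lemma sub_pow_ge' (hp : 3 ≤ p) {a b : ℕ} (h : a ≤ b) :
    (p : ℝ) ^ b * ((p : ℝ) - 1) ≤ (p : ℝ) ^ (b + 1) - (p : ℝ) ^ a := by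
  have h3 : (1 : ℝ) ≤ p := by exact_mod_cast (by omega : 1 ≤ p)
  have := pow_le_pow_right₀ h3 h
  rw [pow_succ]
  linarith

lemma tri_succ (k : ℕ) : (k + 1) * (k + 1 - 1) / 2 = k * (k - 1) / 2 + k := by
  rw [Nat.add_sub_cancel, ← Finset.sum_range_id, ← Finset.sum_range_succ, Finset.sum_range_id]
  rfl

/-- The weight at `r` of the product that vanishes at all other points `j ≤ K`. -/
lemma lag_lower (hp : 3 ≤ p) (K : ℕ) : ∀ r ≤ K,
    ((p : ℝ) - 1) ^ K * (p : ℝ) ^ (K * (K - 1) / 2) ≤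
      |lag p ((Finset.range (K + 1)).erase r) r| := by
  have h3 : (3 : ℝ) ≤ p := by exact_mod_cast hp
  induction K with
  | zero => intro r hr; obtain rfl : r = 0 := by omega
            simp [lag]
  | succ K ih =>
    intro r hr
    rw [tri_succ, pow_succ, pow_add]
    rcases Nat.lt_or_ge r (K + 1) with h | h
    · have he : (Finset.range (K + 1 + 1)).erase r =
          insert (K + 1) ((Finset.range (K + 1)).erase r) := by
        ext j; simp only [Finset.mem_erase, Finset.mem_range, Finset.mem_insert]; omega
      rw [he, lag, Finset.prod_insert (by simp), ← lag, abs_mul, abs_sub_comm]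
      have h1 := ih r (by omega)
      have h2 := (sub_pow_ge' hp (by omega : r ≤ K)).trans (le_abs_self _)
      have := mul_le_mul h2 h1 (by have : (0 : ℝ) ≤ (p : ℝ) - 1 := by linarith
                                   positivity) (abs_nonneg _)
      refine le_trans (le_of_eq ?_) this
      ring
    · obtain rfl : r = K + 1 := by omega
      have he : (Finset.range (K + 1 + 1)).erase (K + 1) = Finset.range (K + 1) := by
        ext j; simp only [Finset.mem_erase, Finset.mem_range]; omega
      have hm : ∏ j ∈ Finset.range (K + 1), ((p : ℝ) ^ j * ((p : ℝ) - 1)) ≤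
          ∏ j ∈ Finset.range (K + 1), ((p : ℝ) ^ (K + 1) - (p : ℝ) ^ j) :=
        Finset.prod_le_prod (fun j _ => mul_nonneg (by positivity) (by linarith))
          fun j hj => sub_pow_ge hp (Finset.mem_range.mp hj)
      rw [he]
      refine le_trans (le_of_eq ?_) (hm.trans (le_abs_self _))
      rw [Finset.prod_mul_distrib, Finset.prod_const, Finset.card_range, Finset.prod_pow_eq_pow_sum,
        Finset.sum_range_succ, Finset.sum_range_id, pow_add, pow_succ]
      ring

/-- Closeness of the moments of order at most `K + 1` controls each individual mass: the product over
`j ≤ K`, `j ≠ r`, isolates the mass at `r`, and beyond `K` it is dominated by `e_{K+1} / p^K`. -/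
lemma mass_bound (hp : 3 ≤ p) {P Q : ℕ → ℝ} {δ : ℝ} {K : ℕ} (hP : ∀ r, 0 ≤ P r) (hQ : ∀ r, 0 ≤ Q r)
    (hPs : ∀ k ≤ K + 1, Summable fun r => P r * ek p k r)
    (hQs : ∀ k ≤ K + 1, HasSum (fun r => Q r * ek p k r) ((p : ℝ) ^ (k * (k - 1) / 2)))
    (hd : ∀ k ≤ K + 1, |∑' r, P r * ek p k r - (p : ℝ) ^ (k * (k - 1) / 2)| ≤ δ)
    {r : ℕ} (hr : r ≤ K) :
    |P r - Q r| ≤ δ * ((1 + (p : ℝ) ^ K) ^ K + 1) + 2 / ((p : ℝ) - 1) ^ K := by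
  have h3 : (3 : ℝ) ≤ p := by exact_mod_cast hp
  have hδ : 0 ≤ δ := (abs_nonneg _).trans (hd 0 (by omega))
  set d : ℕ → ℝ := fun r => P r - Q r with hdd
  have hds : ∀ k ≤ K + 1, Summable fun r => d r * ek p k r := fun k hk => by
    have := (hPs k hk).sub (hQs k hk).summable
    refine this.congr fun r => ?_
    simp only [hdd]; ring
  have hdb : ∀ k ≤ K + 1, |∑' r, d r * ek p k r| ≤ δ := fun k hk => by
    have : ∑' r, d r * ek p k r = ∑' r, P r * ek p k r - (p : ℝ) ^ (k * (k - 1) / 2) := by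
      rw [← (hQs k hk).tsum_eq, ← (hPs k hk).tsum_sub (hQs k hk).summable]
      refine tsum_congr fun r => ?_
      simp only [hdd]; ring
    rw [this]; exact hd k hk
  set S := (Finset.range (K + 1)).erase r with hS
  have hcard : S.card = K := by
    rw [hS, Finset.card_erase_of_mem (Finset.mem_range.mpr (by omega)), Finset.card_range]; rfl
  obtain ⟨s1, b1⟩ := lag_bound hp (fun k hk => hds k (by omega)) (fun k hk => hdb k (by omega)) S
    (fun j hj => by
      have := Finset.mem_range.mp (Finset.mem_of_mem_erase hj); omega) 0 (by omega : 0 + S.card ≤ K)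
  simp only [show ∀ r, ek p 0 r = 1 from fun r => by simp [ek], one_mul, hcard] at s1 b1
  have hL := lag_lower hp K r hr
  rw [← hS] at hL
  have htail : ∀ m, lag p S (m + (K + 1)) * (p : ℝ) ^ K ≤ ek p (K + 1) (m + (K + 1)) ∧
      0 ≤ lag p S (m + (K + 1)) := by
    intro m
    have h0 : 0 ≤ lag p S (m + (K + 1)) := Finset.prod_nonneg fun j hj => by
      have := Finset.mem_range.mp (Finset.mem_of_mem_erase hj)
      have := pow_le_pow_right₀ (by linarith : (1 : ℝ) ≤ p) (by omega : j ≤ m + (K + 1))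
      linarith
    refine ⟨?_, h0⟩
    have : ek p (K + 1) (m + (K + 1)) =
        lag p S (m + (K + 1)) * ((p : ℝ) ^ (m + (K + 1)) - (p : ℝ) ^ r) := by
      rw [lag, hS, Finset.prod_erase_mul _ _ (Finset.mem_range.mpr (by omega : r < K + 1)), ek]
    rw [this]
    refine mul_le_mul_of_nonneg_left ?_ h0
    have a1 := sub_pow_ge' hp (by omega : r ≤ m + K)
    have a2 := pow_le_pow_right₀ (by linarith : (1 : ℝ) ≤ p) (by omega : K ≤ m + K)
    rw [← add_assoc]
    have a3 : (0 : ℝ) < (p : ℝ) ^ (m + K) := by positivity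
    nlinarith
  have hsplit : ∑' m, d m * lag p S m =
      d r * lag p S r + ∑' m, d (m + (K + 1)) * lag p S (m + (K + 1)) := by
    rw [← s1.sum_add_tsum_nat_add (K + 1)]
    congr 1
    refine Finset.sum_eq_single_of_mem r (Finset.mem_range.mpr (by omega)) fun j hj hjr => ?_
    have : lag p S j = 0 := Finset.prod_eq_zero (i := j)
      (Finset.mem_erase.mpr ⟨hjr, hj⟩) (sub_self _)
    rw [this, mul_zero]
  have hsum : Summable fun m => (P m + Q m) * ek p (K + 1) m := by
    refine ((hPs (K + 1) le_rfl).add (hQs (K + 1) le_rfl).summable).congr fun m => ?_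
    ring
  have hsumle : ∑' m, (P m + Q m) * ek p (K + 1) m ≤ 2 * (p : ℝ) ^ ((K + 1) * (K + 1 - 1) / 2) + δ := by
    have h1 : ∑' m, (P m + Q m) * ek p (K + 1) m =
        ∑' m, P m * ek p (K + 1) m + (p : ℝ) ^ ((K + 1) * (K + 1 - 1) / 2) := by
      rw [← (hQs (K + 1) le_rfl).tsum_eq,
        ← (hPs (K + 1) le_rfl).tsum_add (hQs (K + 1) le_rfl).summable]
      exact tsum_congr fun m => by ring
    rw [h1]
    have := (abs_le.mp (hd (K + 1) le_rfl)).2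
    linarith
  have hsum' : Summable fun m => (P (m + (K + 1)) + Q (m + (K + 1))) * ek p (K + 1) (m + (K + 1)) :=
    (summable_nat_add_iff (f := fun m => (P m + Q m) * ek p (K + 1) m) (K + 1)).mpr hsum
  have hrest : ∑' m, (P (m + (K + 1)) + Q (m + (K + 1))) * ek p (K + 1) (m + (K + 1)) ≤
      ∑' m, (P m + Q m) * ek p (K + 1) m := by
    have hsa := hsum.sum_add_tsum_nat_add (K + 1)
    have : 0 ≤ ∑ m ∈ Finset.range (K + 1), (P m + Q m) * ek p (K + 1) m :=
      Finset.sum_nonneg fun m _ => mul_nonneg (add_nonneg (hP m) (hQ m)) (ek_nonneg hp _ _)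
    linarith
  have hq : (0 : ℝ) < (p : ℝ) ^ K := by positivity
  have hpt : ∀ m, ‖d (m + (K + 1)) * lag p S (m + (K + 1))‖ ≤
      (P (m + (K + 1)) + Q (m + (K + 1))) * ek p (K + 1) (m + (K + 1)) / (p : ℝ) ^ K := by
    intro m
    obtain ⟨t1, t2⟩ := htail m
    rw [Real.norm_eq_abs, abs_mul, abs_of_nonneg t2, le_div_iff₀ hq, mul_assoc]
    refine mul_le_mul ?_ t1 (mul_nonneg t2 hq.le) (add_nonneg (hP _) (hQ _))
    have u1 := hP (m + (K + 1)); have u2 := hQ (m + (K + 1))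
    simp only [hdd]
    rw [abs_le]; constructor <;> linarith
  have htb : |∑' m, d (m + (K + 1)) * lag p S (m + (K + 1))| ≤
      (2 * (p : ℝ) ^ ((K + 1) * (K + 1 - 1) / 2) + δ) / (p : ℝ) ^ K := by
    have := tsum_of_norm_bounded (hsum'.div_const ((p : ℝ) ^ K)).hasSum hpt
    rw [Real.norm_eq_abs, tsum_div_const] at this
    refine this.trans ?_
    gcongr
    exact hrest.trans hsumle
  rw [tri_succ, pow_add] at htb
  have hmain : |d r| * |lag p S r| ≤ δ * (1 + (p : ℝ) ^ K) ^ K +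
      (2 * ((p : ℝ) ^ (K * (K - 1) / 2) * (p : ℝ) ^ K) + δ) / (p : ℝ) ^ K := by
    rw [← abs_mul]
    have : d r * lag p S r = ∑' m, d m * lag p S m -
        ∑' m, d (m + (K + 1)) * lag p S (m + (K + 1)) := by rw [hsplit]; ring
    rw [this]
    refine (abs_sub _ _).trans ?_
    linarith
  set G := ((p : ℝ) - 1) ^ K with hG
  set H := (p : ℝ) ^ (K * (K - 1) / 2) with hH
  have hG1 : 1 ≤ G := one_le_pow₀ (by linarith)
  have hH1 : 1 ≤ H := one_le_pow₀ (by linarith)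
  have hK1 : 1 ≤ (p : ℝ) ^ K := one_le_pow₀ (by linarith)
  have h7 : |d r| * (G * H) ≤ δ * (1 + (p : ℝ) ^ K) ^ K + (2 * H + δ) := by
    refine (mul_le_mul_of_nonneg_left hL (abs_nonneg _)).trans (hmain.trans ?_)
    have : (2 * (H * (p : ℝ) ^ K) + δ) / (p : ℝ) ^ K ≤ 2 * H + δ := by
      rw [div_le_iff₀ hq]; nlinarith
    linarith
  have hGH : 0 < G * H := by positivity
  have h8 : |d r| ≤ (δ * (1 + (p : ℝ) ^ K) ^ K + (2 * H + δ)) / (G * H) := by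
    rwa [le_div_iff₀ hGH]
  refine h8.trans ?_
  rw [div_le_iff₀ hGH]
  have h9 : 2 / G * (G * H) = 2 * H := by field_simp
  have h10 : 1 ≤ G * H := one_le_mul_of_one_le_of_one_le hG1 hH1
  have h11 : 0 ≤ δ * ((1 + (p : ℝ) ^ K) ^ K + 1) := by positivity
  nlinarith [mul_le_mul_of_nonneg_left h10 h11]

/-- Closeness of the moments of order at most `K + 1` controls the `ℓ¹` distance. The masses beyond `K`
are bounded through the first moment. -/
lemma l1_bound (hp : 3 ≤ p) {P Q : ℕ → ℝ} {δ : ℝ} {K : ℕ} (hP : ∀ r, 0 ≤ P r) (hQ : ∀ r, 0 ≤ Q r)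
    (hPs : ∀ k ≤ K + 1, Summable fun r => P r * ek p k r)
    (hQs : ∀ k ≤ K + 1, HasSum (fun r => Q r * ek p k r) ((p : ℝ) ^ (k * (k - 1) / 2)))
    (hδ1 : δ ≤ 1)
    (hd : ∀ k ≤ K + 1, |∑' r, P r * ek p k r - (p : ℝ) ^ (k * (k - 1) / 2)| ≤ δ) :
    ∑' r, |P r - Q r| ≤ (K + 1) * (2 * δ * (2 * (p : ℝ) ^ K) ^ K) + (2 * (K + 1) + 3) / 2 ^ K := by
  have h3 : (3 : ℝ) ≤ p := by exact_mod_cast hp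
  have hδ : 0 ≤ δ := (abs_nonneg _).trans (hd 0 (by omega))
  have hK1 : 1 ≤ (p : ℝ) ^ K := one_le_pow₀ (by linarith)
  have e0 : ∀ r, ek p 0 r = 1 := fun r => by simp [ek]
  have e1 : ∀ r, ek p 1 r = (p : ℝ) ^ r - 1 := fun r => by simp [ek]
  have sP : Summable P := by simpa [e0] using hPs 0 (by omega)
  have sQ : Summable Q := by simpa [e0] using (hQs 0 (by omega)).summable
  have sd : Summable fun r => |P r - Q r| := (sP.sub sQ).abs
  have hs1 : Summable fun r => (P r + Q r) * ek p 1 r := by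
    refine ((hPs 1 (by omega)).add (hQs 1 (by omega)).summable).congr fun m => ?_
    ring
  have hs1le : ∑' r, (P r + Q r) * ek p 1 r ≤ 3 := by
    have h1 : ∑' m, (P m + Q m) * ek p 1 m = ∑' m, P m * ek p 1 m + 1 := by
      have hh := (hQs 1 (by omega)).tsum_eq
      norm_num at hh
      rw [← hh, ← (hPs 1 (by omega)).tsum_add (hQs 1 (by omega)).summable]
      exact tsum_congr fun m => by ring
    rw [h1]
    have := (abs_le.mp (hd 1 (by omega))).2
    norm_num at this
    linarith
  rw [← sd.sum_add_tsum_nat_add (K + 1)]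
  refine (add_le_add (b := (K + 1) * (2 * δ * (2 * (p : ℝ) ^ K) ^ K + 2 / 2 ^ K)) (d := 3 / 2 ^ K)
    ?_ ?_).trans (le_of_eq ?_)
  · refine (Finset.sum_le_card_nsmul _ _ (2 * δ * (2 * (p : ℝ) ^ K) ^ K + 2 / 2 ^ K)
      fun r hr => ?_).trans (le_of_eq ?_)
    · refine (mass_bound hp hP hQ hPs hQs hd
        (by have := Finset.mem_range.mp hr; omega : r ≤ K)).trans ?_
      have a1 : (1 + (p : ℝ) ^ K) ^ K ≤ (2 * (p : ℝ) ^ K) ^ K := by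
        gcongr; linarith
      have a2 : (1 : ℝ) ≤ (2 * (p : ℝ) ^ K) ^ K := one_le_pow₀ (by linarith)
      have a3 : 2 / ((p : ℝ) - 1) ^ K ≤ 2 / 2 ^ K := by
        gcongr; linarith
      nlinarith
    · rw [Finset.card_range, nsmul_eq_mul]; push_cast; ring
  · have hs2 : Summable fun r => (P (r + (K + 1)) + Q (r + (K + 1))) * ek p 1 (r + (K + 1)) :=
      (summable_nat_add_iff (f := fun m => (P m + Q m) * ek p 1 m) (K + 1)).mpr hs1
    have h5 : ∑' r, (P (r + (K + 1)) + Q (r + (K + 1))) * ek p 1 (r + (K + 1)) ≤ 3 := by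
      refine le_trans ?_ hs1le
      rw [← hs1.sum_add_tsum_nat_add (K + 1)]
      have : 0 ≤ ∑ m ∈ Finset.range (K + 1), (P m + Q m) * ek p 1 m :=
        Finset.sum_nonneg fun m _ => mul_nonneg (add_nonneg (hP m) (hQ m)) (ek_nonneg hp _ _)
      linarith
    refine (((summable_nat_add_iff (f := fun r => |P r - Q r|) (K + 1)).mpr sd).tsum_le_tsum (g := fun r =>
      (P (r + (K + 1)) + Q (r + (K + 1))) * ek p 1 (r + (K + 1)) / 2 ^ K) (fun r => ?_)
      (hs2.div_const _)).trans ?_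
    · rw [le_div_iff₀ (by positivity), e1]
      have u1 := hP (r + (K + 1)); have u2 := hQ (r + (K + 1))
      refine mul_le_mul ?_ ?_ (by positivity) (by linarith)
      · rw [abs_le]; constructor <;> linarith
      · have b1 : (p : ℝ) ^ (K + 1) ≤ (p : ℝ) ^ (r + (K + 1)) :=
          pow_le_pow_right₀ (by linarith) (by omega)
        have b2 : (2 : ℝ) ^ K ≤ (p : ℝ) ^ K := by gcongr; linarith
        rw [pow_succ] at b1
        nlinarith
    · rw [tsum_div_const]
      gcongr
  · ring

end Inversion

/-! ### The law of the corank -/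

section Law
variable {p : ℕ} [Fact p.Prime]

/-- The law modulo `p` of an integer of law `μ`. -/
def law (μ : Measure ℤ) (p : ℕ) (a : ZMod p) : ℝ := (μ {x : ℤ | (x : ZMod p) = a}).toReal

lemma law_nonneg (μ : Measure ℤ) (a : ZMod p) : 0 ≤ law μ p a := ENNReal.toReal_nonneg

lemma law_sum (μ : Measure ℤ) [IsProbabilityMeasure μ] : ∑ a : ZMod p, law μ p a = 1 := by
  have h : (⋃ a ∈ (Finset.univ : Finset (ZMod p)), {x : ℤ | (x : ZMod p) = a}) = Set.univ := by
    ext x; simp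
  have h2 := measure_biUnion_finset (μ := μ) (s := (Finset.univ : Finset (ZMod p)))
    (f := fun a => {x : ℤ | (x : ZMod p) = a})
    (fun a _ b _ hab => Set.disjoint_left.mpr fun x (hx : _ = _) (hy : _ = _) => hab (hx.symm.trans hy))
    (fun _ _ => MeasurableSet.of_discrete)
  rw [h, measure_univ] at h2
  simp only [law]
  rw [← ENNReal.toReal_sum (fun a _ => measure_ne_top _ _), ← h2]
  simp

lemma law_le {α : ℝ} {μ : Measure ℤ} (hα : α ≤ 1) (h : IsBalanced α μ) (a : ZMod p) :
    law μ p a ≤ 1 - α := by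
  have := h p Fact.out a
  exact ENNReal.toReal_le_of_le_ofReal (by linarith) this

open scoped Classical in
/-- Independent entries of law `μ`, reduced modulo `p`, are independent of law `law μ p`. -/
lemma pi_law (μ : Measure ℤ) [IsProbabilityMeasure μ] {ι : Type*} [Fintype ι]
    (S : Finset (ι → ZMod p)) :
    ((Measure.pi fun _ : ι => μ) {x | (fun q => ((x q : ℤ) : ZMod p)) ∈ S}).toReal =
      ∑ m ∈ S, ∏ q, law μ p (m q) := by
  have h : {x : ι → ℤ | (fun q => ((x q : ℤ) : ZMod p)) ∈ S} =
      ⋃ m ∈ S, Set.univ.pi fun q => {z : ℤ | (z : ZMod p) = m q} := by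
    ext x
    simp only [Set.mem_ofPred_eq, Set.mem_iUnion, Set.mem_pi, Set.mem_univ, true_implies, exists_prop]
    constructor
    · exact fun hx => ⟨_, hx, fun q => rfl⟩
    · rintro ⟨m, hm, hx⟩
      rwa [show (fun q => ((x q : ℤ) : ZMod p)) = m from funext hx]
  rw [h, measure_biUnion_finset, ENNReal.toReal_sum (fun a _ => measure_ne_top _ _)]
  · refine Finset.sum_congr rfl fun m _ => ?_
    rw [Measure.pi_pi, ENNReal.toReal_prod]
    rfl
  · intro m _ m' _ hm
    refine Set.disjoint_left.mpr fun x hx hy => hm (funext fun q => ?_)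
    have h1 : _ = _ := hx q (Set.mem_univ q)
    have h2 : _ = _ := hy q (Set.mem_univ q)
    exact h1.symm.trans h2
  · exact fun m _ => MeasurableSet.univ_pi fun q => MeasurableSet.of_discrete

/-- The law of the corank modulo `p` of the random symmetric integer matrix. -/
def corankLaw (μ : Measure ℤ) (hμ : IsProbabilityMeasure μ) (p n k : ℕ) : ℝ :=
  ((matMeasure μ hμ n)
    {x | n - ((symMatrix n x).map (fun z : ℤ => (z : ZMod p))).rank = k}).toReal

open scoped Classical in
lemma corankLaw_eq (μ : Measure ℤ) (hμ : IsProbabilityMeasure μ) (n k : ℕ) :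
    corankLaw μ hμ p n k = ∑ m : Fin n × Fin n → ZMod p,
      if n - (symF n m).rank = k then wm (law μ p) m else 0 := by
  have h := pi_law μ (Finset.univ.filter fun m : Fin n × Fin n → ZMod p => n - (symF n m).rank = k)
  rw [Finset.sum_filter] at h
  rw [corankLaw, matMeasure]
  refine Eq.trans ?_ h
  congr 2
  ext x
  simp only [Set.mem_ofPred_eq, Finset.mem_filter, Finset.mem_univ, true_and]
  have : (symMatrix n x).map (fun z : ℤ => (z : ZMod p)) =
      symF n (fun q => ((x q : ℤ) : ZMod p)) := by
    ext i j
    simp only [symMatrix, symF, Matrix.map_apply, Matrix.of_apply]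
    split_ifs <;> rfl
  rw [this]

/-- The moments of the corank law, as averages over matrices with entries in `ZMod p`. -/
lemma hasSum_corankLaw (μ : Measure ℤ) (hμ : IsProbabilityMeasure μ) (n k : ℕ) :
    HasSum (fun r => corankLaw μ hμ p n r * ek p k r)
      (∑ m : Fin n × Fin n → ZMod p, wm (law μ p) m * ek p k (n - (symF n m).rank)) := by
  classical
  simp_rw [corankLaw_eq, Finset.sum_mul]
  refine hasSum_sum fun m _ => ?_
  have hf : (fun r => (if n - (symF n m).rank = r then wm (law μ p) m else 0) * ek p k r) =
      fun r => if r = n - (symF n m).rank then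
        wm (law μ p) m * ek p k (n - (symF n m).rank) else 0 := by
    funext r
    by_cases h : n - (symF n m).rank = r
    · rw [if_pos h, if_pos h.symm, h]
    · rw [if_neg h, if_neg (Ne.symm h), zero_mul]
  rw [hf]
  exact hasSum_ite_eq _ _

end Law

/-! ### Explicit bound for the moments -/

section MomentBound
variable {p : ℕ} [Fact p.Prime] {f : ZMod p → ℝ}

lemma one_sub_sum_le (k : ℕ) (a : ℕ → ℝ) (h0 : ∀ i < k, 0 ≤ a i) (h1 : ∀ i < k, a i ≤ 1) :
    1 - ∑ i ∈ Finset.range k, a i ≤ ∏ i ∈ Finset.range k, (1 - a i) ∧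
      0 ≤ ∏ i ∈ Finset.range k, (1 - a i) ∧ ∏ i ∈ Finset.range k, (1 - a i) ≤ 1 := by
  induction k with
  | zero => simp
  | succ k ih =>
    obtain ⟨i1, i2, i3⟩ := ih (fun i hi => h0 i (by omega)) (fun i hi => h1 i (by omega))
    have u0 := h0 k (by omega)
    have u1 := h1 k (by omega)
    rw [Finset.sum_range_succ, Finset.prod_range_succ]
    refine ⟨by nlinarith, mul_nonneg i2 (by linarith), by nlinarith⟩

/-- The number of linearly independent `k`-tuples in `𝔽_p^n` is close to `p^{nk}`. -/
lemma ek_near (hp : 3 ≤ p) {n k : ℕ} (hk : k ≤ n) :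
    |ek p k n / (p : ℝ) ^ (n * k) - 1| ≤ k * (p : ℝ) ^ k / (p : ℝ) ^ n := by
  have h3 : (1 : ℝ) ≤ p := by exact_mod_cast (by omega : 1 ≤ p)
  have hpn : (0 : ℝ) < (p : ℝ) ^ n := by positivity
  have heq : ek p k n / (p : ℝ) ^ (n * k) =
      ∏ i ∈ Finset.range k, (1 - (p : ℝ) ^ i / (p : ℝ) ^ n) := by
    rw [ek, pow_mul]
    nth_rewrite 2 [← Finset.card_range k]
    rw [← Finset.prod_const, ← Finset.prod_div_distrib]
    refine Finset.prod_congr rfl fun i _ => ?_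
    rw [sub_div, div_self hpn.ne']
  obtain ⟨i1, i2, i3⟩ := one_sub_sum_le k (fun i => (p : ℝ) ^ i / (p : ℝ) ^ n)
    (fun i _ => by positivity) (fun i hi => by
      rw [div_le_one hpn]; exact pow_le_pow_right₀ h3 (by omega))
  have hsum : ∑ i ∈ Finset.range k, (p : ℝ) ^ i / (p : ℝ) ^ n ≤ k * (p : ℝ) ^ k / (p : ℝ) ^ n := by
    refine (Finset.sum_le_card_nsmul _ _ ((p : ℝ) ^ k / (p : ℝ) ^ n) fun i hi => ?_).trans
      (le_of_eq ?_)
    · gcongr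
      exact (Finset.mem_range.mp hi).le
    · rw [Finset.card_range, nsmul_eq_mul]; ring
  rw [heq, abs_sub_comm, abs_of_nonneg (by linarith)]
  linarith

/-- The `k`-th moment of the corank, with an explicit error. -/
lemma moment_bound {α : ℝ} (h0 : ∀ a, 0 ≤ f a) (h1 : ∑ a, f a = 1)
    (hα : ∀ a, f a ≤ 1 - α) (hα0 : 0 < α) (hα1 : α ≤ 1) {n k : ℕ} (hk : 1 ≤ k) (hkn : k ≤ n)
    {ε δ T b : ℝ} {s e t₀ : ℕ} (hε : 0 < ε) (hδ : 0 < δ) (hδ1 : δ ≤ 1) (hT : 0 < T)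
    (ht₀ : 16 / α ^ 2 < (3 / 2) ^ t₀) (hεδ : 4 ^ t₀ * ε + 2 ^ t₀ * δ ≤ α / 2)
    (hp3 : 3 ≤ p) (hp : 12 / α ^ 2 < p)
    (hs : 2 * k * Real.log p ≤ δ * s)
    (he : (n + 8 * k * n * Real.log p) / T + s * (T / ε) ≤ e) (hen : e + 1 ≤ n)
    (hb0 : 0 ≤ b) (hb1 : b ≤ 1 / 2) (hbα : Real.sqrt (1 - α) ≤ Real.exp (-b)) :
    |∑ m : Fin n × Fin n → ZMod p, wm f m * ek p k (n - (symF n m).rank) -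
      (p : ℝ) ^ (k * (k - 1) / 2)| ≤
    Real.exp (-(n * Real.log p)) +
    Real.exp (2 + (e + 1) * Real.log n + 2 * k * Real.log p * (s + 2 * k + e + 2) -
      b * (n - (e + 1))) +
    Real.exp (k ^ 2 * Real.log p + k + k * Real.log p - n * Real.log p) := by
  classical
  have hp3' : (3 : ℝ) ≤ p := by exact_mod_cast hp3
  have hn : 0 < n := by omega
  have hnr : (0 : ℝ) < n := by exact_mod_cast hn
  set L := Real.log p with hL
  have hL0 : 0 ≤ L := Real.log_nonneg (by linarith)
  have hpow : ∀ m : ℕ, (p : ℝ) ^ m = Real.exp (m * L) := fun m => by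
    rw [Real.exp_nat_mul, hL, Real.exp_log (by linarith)]
  have hcard : (Fintype.card ((Fin k → ZMod p) × (Fin k → ZMod p)) : ℝ) = (p : ℝ) ^ (2 * k) := by
    rw [Fintype.card_prod, Fintype.card_fun, ZMod.card, Fintype.card_fin]
    push_cast; ring
  have hme := moment_error (f := f) (by omega) h0 h1 n k
  -- The choice of `D` turns the first term of `error_bound` into `p^{2kn} p^{-2kn}`.
  have heb := error_bound (hyp_isSymm (p := p) (k := k)) (hyp_nondegenerate (p := p) (k := k)) h0 h1 hα hα0 hα1
    hk (hyp_finrank (p := p) (k := k)) hn (D := n + 8 * k * n * L) (β := Real.exp (-b)) (s := s) (e := e) hε hδ hδ1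
    hT ht₀ hεδ hp (by rw [hcard, hpow, Real.log_exp]; push_cast; exact hs) he
    (by
      have := Real.add_one_le_exp (-b)
      linarith) hbα (by
      rw [Real.exp_le_one_iff]; linarith)
  have hme2 := hme.trans (le_trans (le_of_eq (by congr!)) heb)
  rw [hcard] at hme2
  set E := ∑ m : Fin n × Fin n → ZMod p, wm f m * ek p k (n - (symF n m).rank) with hE
  have hP : (0 : ℝ) < (p : ℝ) ^ (n * k) := by positivity
  have hsplit : E - (p : ℝ) ^ (k * (k - 1) / 2) =
      ((p : ℝ) ^ (n * k) * E - ek p k n * (p : ℝ) ^ (k * (k - 1) / 2)) / (p : ℝ) ^ (n * k) +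
      (ek p k n / (p : ℝ) ^ (n * k) - 1) * (p : ℝ) ^ (k * (k - 1) / 2) := by
    field_simp
    ring
  rw [hsplit]
  refine (abs_add_le _ _).trans (add_le_add ?_ ?_)
  · rw [abs_div, abs_of_pos hP]
    refine (div_le_div_of_nonneg_right hme2 hP.le).trans ?_
    rw [add_div]
    refine add_le_add ?_ ?_
    · rw [← pow_mul, hpow, hpow, ← Real.exp_add, ← Real.exp_sub, Real.exp_le_exp]
      push_cast
      have : (1 : ℝ) ≤ k := by exact_mod_cast hk
      have h2 : (n : ℝ) * L ≤ n * L * k := le_mul_of_one_le_right (by positivity) this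
      nlinarith
    · have hexp3 : (3 : ℝ) ≤ Real.exp 2 := by
        have := Real.add_one_le_exp (2 : ℝ)
        linarith
      have hnpow : (n : ℝ) ^ (e + 1) = Real.exp ((e + 1) * Real.log n) := by
        rw [← Real.exp_log hnr, ← Real.exp_nat_mul, Real.exp_log hnr]; push_cast; rfl
      have hbpow : Real.exp (-b) ^ (n - (e + 1)) = Real.exp (-(b * (n - (e + 1)))) := by
        rw [← Real.exp_nat_mul, Nat.cast_sub hen]; push_cast; congr 1; ring
      rw [hnpow, hbpow, ← pow_mul, ← pow_mul, ← pow_mul]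
      simp only [hpow, ← Real.exp_add]
      rw [mul_div_assoc, ← Real.exp_sub]
      refine (mul_le_mul_of_nonneg_right hexp3 (Real.exp_pos _).le).trans ?_
      rw [← Real.exp_add, Real.exp_le_exp]
      push_cast
      apply le_of_eq
      ring
  · rw [abs_mul, abs_of_nonneg (by positivity : (0 : ℝ) ≤ (p : ℝ) ^ (k * (k - 1) / 2))]
    refine (mul_le_mul_of_nonneg_right (ek_near hp3 hkn) (by positivity)).trans ?_
    have hkk : (k : ℝ) ≤ Real.exp k := by
      have := Real.add_one_le_exp (k : ℝ)
      linarith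
    have htri : (p : ℝ) ^ (k * (k - 1) / 2) ≤ (p : ℝ) ^ (k ^ 2) := by
      refine pow_le_pow_right₀ (by linarith) ((Nat.div_le_self _ _).trans ?_)
      rw [pow_two]; exact Nat.mul_le_mul_left _ (by omega)
    calc (k : ℝ) * (p : ℝ) ^ k / (p : ℝ) ^ n * (p : ℝ) ^ (k * (k - 1) / 2)
        ≤ Real.exp k * (p : ℝ) ^ k / (p : ℝ) ^ n * (p : ℝ) ^ (k ^ 2) := by gcongr
      _ = _ := by
        rw [hpow, hpow, hpow, ← Real.exp_add, ← Real.exp_sub, ← Real.exp_add]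
        push_cast; congr 1; ring

end MomentBound

/-! ### Choice of parameters -/

section Params

/-- Admissible parameters when `n = x ^ 100`, `log p = L ≤ x` and `k ≤ x ^ 3`. With the threshold
`T = x ^ 50`, both contributions to the number `e` of exceptional indices are `O(x ^ 54)`, and every
exponent in `moment_bound` is at most `C x ^ 58 - b n`. -/
lemma params {ε δ b : ℝ} (hε : 0 < ε) (hδ : 0 < δ) (hb0 : 0 < b) (hb1 : b ≤ 1 / 2) :
    ∃ C : ℝ, 0 < C ∧ ∀ (n k : ℕ) (x L : ℝ), 2 ≤ x → (n : ℝ) = x ^ 100 → 1 ≤ L → L ≤ x →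
      (k : ℝ) ≤ x ^ 3 → ∃ s e : ℕ, 2 * k * L ≤ δ * s ∧
        (n + 8 * k * n * L) / x ^ 50 + s * (x ^ 50 / ε) ≤ e ∧ (e : ℝ) + 1 ≤ C * x ^ 58 ∧
        -(n * L) ≤ C * x ^ 58 - b * x ^ 100 ∧
        2 + (e + 1) * Real.log n + 2 * k * L * (s + 2 * k + e + 2) - b * (n - (e + 1)) ≤
          C * x ^ 58 - b * x ^ 100 ∧
        (k : ℝ) ^ 2 * L + k + k * L - n * L ≤ C * x ^ 58 - b * x ^ 100 := by
  obtain ⟨C₁, hC₁⟩ : ∃ C₁, C₁ = 2 / δ + 1 := ⟨_, rfl⟩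
  obtain ⟨C₂, hC₂⟩ : ∃ C₂, C₂ = C₁ / ε + 11 := ⟨_, rfl⟩
  have hC₁0 : 0 < C₁ := by rw [hC₁]; positivity
  have hC₂0 : 0 < C₂ := by rw [hC₂]; positivity
  refine ⟨3 + 2 + 100 * C₂ + 2 * (C₁ + 2 + C₂ + 1) + C₂, by positivity, ?_⟩
  intro n k x L hx hn hL1 hLx hk
  have hx1 : 1 ≤ x := by linarith
  have hx0 : 0 < x := by linarith
  have hk0 : (0 : ℝ) ≤ k := Nat.cast_nonneg k
  have mono : ∀ {i j : ℕ}, i ≤ j → x ^ i ≤ x ^ j := fun h => pow_le_pow_right₀ hx1 h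
  have one_le : ∀ i : ℕ, 1 ≤ x ^ i := fun i => one_le_pow₀ hx1
  have hkL : k * L ≤ x ^ 4 := by
    calc k * L ≤ x ^ 3 * x := by gcongr
      _ = x ^ 4 := by ring
  have hkL0 : 0 ≤ k * L := by positivity
  set s := ⌈2 * k * L / δ⌉₊ with hs
  have hs1 : 2 * k * L / δ ≤ s := Nat.le_ceil _
  have hs2 : (s : ℝ) ≤ C₁ * x ^ 4 := by
    have h1 : (s : ℝ) < 2 * k * L / δ + 1 := Nat.ceil_lt_add_one (by positivity)
    have h2 : 2 * k * L / δ ≤ 2 / δ * x ^ 4 := by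
      calc 2 * k * L / δ = 2 / δ * (k * L) := by ring
        _ ≤ _ := by gcongr
    have := one_le 4
    rw [hC₁]; linarith
  set y := (n + 8 * k * n * L) / x ^ 50 + s * (x ^ 50 / ε) with hy
  have hy0 : 0 ≤ y := by positivity
  have hy1 : y ≤ (C₁ / ε + 9) * x ^ 54 := by
    have h1 : (n + 8 * k * n * L) / x ^ 50 ≤ 9 * x ^ 54 := by
      rw [div_le_iff₀ (by positivity), hn]
      calc x ^ 100 + 8 * k * x ^ 100 * L = x ^ 100 * 1 + 8 * (k * L) * x ^ 100 := by ring
        _ ≤ x ^ 100 * x ^ 4 + 8 * x ^ 4 * x ^ 100 := by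
            gcongr
            exact one_le 4
        _ = 9 * x ^ 54 * x ^ 50 := by ring
    have h2 : s * (x ^ 50 / ε) ≤ C₁ / ε * x ^ 54 := by
      calc s * (x ^ 50 / ε) ≤ C₁ * x ^ 4 * (x ^ 50 / ε) := by gcongr
        _ = C₁ / ε * x ^ 54 := by ring
    rw [hy]; linarith
  set e := ⌈y⌉₊ with he
  have he1 : y ≤ e := Nat.le_ceil _
  have he2 : (e : ℝ) + 1 ≤ C₂ * x ^ 54 := by
    have h1 : (e : ℝ) < y + 1 := Nat.ceil_lt_add_one hy0
    have := one_le 54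
    rw [hC₂]; linarith
  have m54 : x ^ 54 ≤ x ^ 58 := mono (by norm_num)
  have p58 : 0 < x ^ 58 := by positivity
  have p54 : 0 < x ^ 54 := by positivity
  have p100 : 0 < x ^ 100 := by positivity
  refine ⟨s, e, ?_, he1, ?_, ?_, ?_, ?_⟩
  · rw [div_le_iff₀ hδ] at hs1; linarith
  · refine he2.trans ?_
    have h1 : C₂ * x ^ 54 ≤ C₂ * x ^ 58 := by gcongr
    have h2 : C₂ ≤ 3 + 2 + 100 * C₂ + 2 * (C₁ + 2 + C₂ + 1) + C₂ := by linarith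
    exact h1.trans (by gcongr)
  · rw [hn]
    have h1 : x ^ 100 * 1 ≤ x ^ 100 * L := by gcongr
    have h2 : b * x ^ 100 ≤ 1 * x ^ 100 := by gcongr; linarith
    have h3 : 0 ≤ (3 + 2 + 100 * C₂ + 2 * (C₁ + 2 + C₂ + 1) + C₂) * x ^ 58 := by positivity
    linarith
  · have hlog0 : 0 ≤ Real.log x := Real.log_nonneg hx1
    have hlog : Real.log n ≤ 100 * x := by
      rw [hn, Real.log_pow]
      have := Real.log_le_self hx0.le
      push_cast; linarith
    have a1 : ((e : ℝ) + 1) * Real.log n ≤ 100 * C₂ * x ^ 58 := by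
      calc ((e : ℝ) + 1) * Real.log n ≤ (C₂ * x ^ 54) * (100 * x) := by
            refine mul_le_mul he2 hlog ?_ (by positivity)
            rw [hn, Real.log_pow]; positivity
        _ = 100 * C₂ * x ^ 55 := by ring
        _ ≤ 100 * C₂ * x ^ 58 := by
            have : x ^ 55 ≤ x ^ 58 := mono (by norm_num)
            gcongr
    have a2 : (s : ℝ) + 2 * k + e + 2 ≤ (C₁ + 2 + C₂ + 1) * x ^ 54 := by
      have u1 : C₁ * x ^ 4 ≤ C₁ * x ^ 54 := by
        have : x ^ 4 ≤ x ^ 54 := mono (by norm_num)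
        gcongr
      have u2 : x ^ 3 ≤ x ^ 54 := mono (by norm_num)
      have u3 := one_le 54
      linarith
    have a3 : 2 * k * L * (s + 2 * k + e + 2) ≤ 2 * (C₁ + 2 + C₂ + 1) * x ^ 58 := by
      calc 2 * k * L * (s + 2 * k + e + 2) = 2 * (k * L) * (s + 2 * k + e + 2) := by ring
        _ ≤ 2 * x ^ 4 * ((C₁ + 2 + C₂ + 1) * x ^ 54) := by gcongr
        _ = _ := by ring
    have a4 : b * ((e : ℝ) + 1) ≤ C₂ * x ^ 58 := by
      have w0 : (0 : ℝ) ≤ (e : ℝ) + 1 := by positivity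
      calc b * ((e : ℝ) + 1) ≤ 1 * (C₂ * x ^ 58) := by
            refine mul_le_mul (by linarith) (he2.trans (by gcongr)) w0 (by norm_num)
        _ = _ := one_mul _
    have a5 := one_le 58
    rw [hn] at a1 ⊢
    linarith
  · rw [hn]
    have b1 : (k : ℝ) ^ 2 * L ≤ x ^ 58 := by
      calc (k : ℝ) ^ 2 * L ≤ (x ^ 3) ^ 2 * x := by gcongr
        _ = x ^ 7 := by ring
        _ ≤ x ^ 58 := mono (by norm_num)
    have b2 : (k : ℝ) ≤ x ^ 58 := hk.trans (mono (by norm_num))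
    have b3 : k * L ≤ x ^ 58 := hkL.trans (mono (by norm_num))
    have h1 : x ^ 100 * 1 ≤ x ^ 100 * L := by gcongr
    have h2 : b * x ^ 100 ≤ 1 * x ^ 100 := by gcongr; linarith
    have h3 : 0 ≤ (2 + 100 * C₂ + 2 * (C₁ + 2 + C₂ + 1) + C₂) * x ^ 58 := by positivity
    linarith

lemma tail_le (K : ℕ) : (2 * ((K : ℝ) + 1) + 3) / 2 ^ K ≤ 10 * Real.exp (-(K / 4)) := by
  have h1 : 2 * ((K : ℝ) + 1) + 3 ≤ 10 * (3 / 2) ^ K := by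
    induction K with
    | zero => norm_num
    | succ K ih =>
      have : (1 : ℝ) ≤ (3 / 2) ^ K := one_le_pow₀ (by norm_num)
      rw [pow_succ]; push_cast; linarith
  have h2 : ((3 : ℝ) / 4) ^ K ≤ Real.exp (-(K / 4)) := by
    have h3 : (3 : ℝ) / 4 ≤ Real.exp (-(1 / 4)) := by
      have := Real.add_one_le_exp (-(1 / 4) : ℝ)
      linarith
    calc ((3 : ℝ) / 4) ^ K ≤ Real.exp (-(1 / 4)) ^ K := by gcongr
      _ = _ := by rw [← Real.exp_nat_mul]; congr 1; ring
  calc (2 * ((K : ℝ) + 1) + 3) / 2 ^ K ≤ 10 * (3 / 2) ^ K / 2 ^ K := by gcongr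
    _ = 10 * (3 / 4) ^ K := by rw [mul_div_assoc, ← div_pow]; norm_num
    _ ≤ _ := by gcongr

end Params

section Final

/-- The `ℓ¹` bound in terms of `x = n^{1/100}`. The condition `x₀ ≤ x` will follow from `p ≥ p₀` and
`log p ≤ x`, so small `n` need no separate treatment. -/
lemma main_bound (α : ℝ) (hα : 0 < α) (μ : Measure ℤ) (hμ : IsProbabilityMeasure μ)
    (hbal : IsBalanced α μ) : ∃ x₀ : ℝ, 4 ≤ x₀ ∧ ∃ p₀ : ℕ, ∀ (n p : ℕ) (x : ℝ), p.Prime → p₀ ≤ p →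
      x₀ ≤ x → (n : ℝ) = x ^ 100 → Real.log p ≤ x →
      ∑' k, |corankLaw μ hμ p n k - muSym p k| ≤ 16 * Real.exp (-x) := by
  -- Replacing `α` by a smaller constant keeps the law balanced.
  obtain ⟨a, ha⟩ : ∃ a, a = min α (1 / 2) := ⟨_, rfl⟩
  have ha0 : 0 < a := by rw [ha]; positivity
  have ha1 : a ≤ 1 / 2 := by rw [ha]; exact min_le_right _ _
  have hbal' : IsBalanced a μ := fun p hp r => (hbal p hp r).trans
    (ENNReal.ofReal_le_ofReal (by rw [ha]; linarith [min_le_left α (1 / 2)]))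
  obtain ⟨t₀, ht₀⟩ := pow_unbounded_of_one_lt (16 / a ^ 2) (by norm_num : (1 : ℝ) < 3 / 2)
  obtain ⟨δ, hδd⟩ : ∃ δ, δ = a / 4 / 2 ^ t₀ := ⟨_, rfl⟩
  obtain ⟨ε, hεd⟩ : ∃ ε, ε = a / 4 / 4 ^ t₀ := ⟨_, rfl⟩
  have hδ : 0 < δ := by rw [hδd]; positivity
  have hε : 0 < ε := by rw [hεd]; positivity
  have hδ1 : δ ≤ 1 := by
    rw [hδd, div_le_iff₀ (by positivity)]
    have : (1 : ℝ) ≤ 2 ^ t₀ := one_le_pow₀ (by norm_num)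
    linarith
  have hεδ : 4 ^ t₀ * ε + 2 ^ t₀ * δ ≤ a / 2 := by
    rw [hδd, hεd, mul_div_cancel₀ _ (by positivity), mul_div_cancel₀ _ (by positivity)]
    linarith
  obtain ⟨b, hb⟩ : ∃ b, b = a / 2 := ⟨_, rfl⟩
  have hb0 : 0 < b := by rw [hb]; positivity
  have hb1 : b ≤ 1 / 2 := by rw [hb]; linarith
  have hbα : Real.sqrt (1 - a) ≤ Real.exp (-b) := by
    rw [Real.sqrt_le_left (Real.exp_pos _).le, ← Real.exp_nat_mul]
    have := Real.add_one_le_exp (-a)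
    refine le_trans (by linarith) (this.trans (le_of_eq ?_))
    rw [hb]; congr 1; push_cast; ring
  obtain ⟨C, hC0, hC⟩ := params hε hδ hb0 hb1
  refine ⟨max 4 ((C + 4) / b), le_max_left _ _, ⌈12 / a ^ 2⌉₊ + 3, ?_⟩
  intro n p x hp hpp hx hn hLx
  have : Fact p.Prime := ⟨hp⟩
  have hp3 : 3 ≤ p := by omega
  have hp3' : (3 : ℝ) ≤ p := by exact_mod_cast hp3
  have hp12 : 12 / a ^ 2 < p := by
    refine (Nat.le_ceil _).trans_lt ?_
    exact_mod_cast (by omega : ⌈12 / a ^ 2⌉₊ < p)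
  have hx4 : 4 ≤ x := (le_max_left _ _).trans hx
  have hxC : C + 4 ≤ b * x := by
    have := (le_max_right _ _).trans hx
    rw [div_le_iff₀ hb0] at this; linarith
  have hx1 : 1 ≤ x := by linarith
  have hx0 : 0 < x := by linarith
  set L := Real.log p with hL
  have hL1 : 1 ≤ L := by
    rw [hL, Real.le_log_iff_exp_le (by linarith)]
    have := Real.exp_one_lt_d9
    linarith
  have mono : ∀ {i j : ℕ}, i ≤ j → x ^ i ≤ x ^ j := fun h => pow_le_pow_right₀ hx1 h
  have hdec : (C + 3) * x ^ 58 - b * x ^ 100 ≤ -x := by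
    have h1 : (C + 4) * x ^ 58 ≤ b * x * x ^ 58 := by gcongr
    have h2 : b * x * x ^ 58 ≤ b * x ^ 100 := by
      have : x ^ 59 ≤ x ^ 100 := mono (by norm_num)
      calc b * x * x ^ 58 = b * x ^ 59 := by ring
        _ ≤ _ := by gcongr
    have h3 : x ≤ x ^ 58 := le_self_pow₀ hx1 (by norm_num)
    linarith
  set Δ := 3 * Real.exp (C * x ^ 58 - b * x ^ 100) with hΔ
  have p58 : 0 < x ^ 58 := by positivity
  have hΔ1 : Δ ≤ 1 := by
    have h1 : Real.exp (C * x ^ 58 - b * x ^ 100) ≤ Real.exp (-x) :=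
      Real.exp_le_exp.mpr (by linarith)
    have h2 : Real.exp (-x) ≤ 1 / 5 := by
      rw [Real.exp_neg, ← one_div]
      have := Real.add_one_le_exp x
      exact one_div_le_one_div_of_le (by norm_num) (by linarith)
    rw [hΔ]; linarith
  -- `K ≥ 4 x` makes the tail `2 ^ {-K}` negligible, while `p ^ {K ^ 2} ≤ exp (x ^ 7)` is absorbed by
  -- the moment error `exp (-b x ^ 100)`.
  set K := ⌈x ^ 2⌉₊ with hK
  have hK1 : x ^ 2 ≤ K := Nat.le_ceil _
  have hK2 : (K : ℝ) + 1 ≤ x ^ 3 := by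
    have h1 : (K : ℝ) < x ^ 2 + 1 := Nat.ceil_lt_add_one (by positivity)
    have h2 : 4 * x ^ 2 ≤ x ^ 3 := by
      calc 4 * x ^ 2 ≤ x * x ^ 2 := by gcongr
        _ = x ^ 3 := by ring
    have h3 : 1 ≤ x ^ 2 := one_le_pow₀ hx1
    linarith
  have hmom : ∀ k ≤ K + 1, |∑' r, corankLaw μ hμ p n r * ek p k r -
      (p : ℝ) ^ (k * (k - 1) / 2)| ≤ Δ := by
    intro k hk
    rw [(hasSum_corankLaw μ hμ n k).tsum_eq]
    have hkx : (k : ℝ) ≤ x ^ 3 := le_trans (by exact_mod_cast hk) hK2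
    rcases Nat.eq_zero_or_pos k with rfl | hk1
    · have hone : ∑ m : Fin n × Fin n → ZMod p, wm (law μ p) m * ek p 0 (n - (symF n m).rank) = 1 := by
        have h := Finset.prod_univ_sum (fun _ : Fin n × Fin n => (Finset.univ : Finset (ZMod p)))
          (fun _ c => law μ p c)
        rw [Fintype.piFinset_univ] at h
        simp only [law_sum, Finset.prod_const_one] at h
        simp only [ek, Finset.range_zero, Finset.prod_empty, mul_one, wm]
        exact h.symm
      rw [hone]
      have : 0 ≤ Δ := by positivity
      simpa using this
    · obtain ⟨s, e, c1, c2, c3, c4, c5, c6⟩ := hC n k x L (by linarith) hn hL1 hLx hkx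
      have hen : e + 1 ≤ n := by
        have h1 : ((e + 1 : ℕ) : ℝ) ≤ n := by
          push_cast
          rw [hn]
          have h2 : b * x ^ 100 ≤ 1 * x ^ 100 := by gcongr; linarith
          linarith
        exact_mod_cast h1
      have hkn : k ≤ n := by
        have : (k : ℝ) ≤ n := by
          rw [hn]; exact hkx.trans (mono (by norm_num))
        exact_mod_cast this
      refine (moment_bound (f := law μ p) (law_nonneg μ) (law_sum μ)
        (law_le (by linarith) hbal') ha0 (by linarith) hk1 hkn hε hδ hδ1
        (by positivity : 0 < x ^ 50) ht₀ hεδ hp3 hp12 c1 c2 hen hb0.le hb1 hbα).trans ?_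
      have d1 := Real.exp_le_exp.mpr c4
      have d2 := Real.exp_le_exp.mpr c5
      have d3 := Real.exp_le_exp.mpr c6
      rw [hΔ]; linarith
  refine (l1_bound hp3 (fun r => ENNReal.toReal_nonneg) (muSym_nonneg hp3)
    (fun k _ => (hasSum_corankLaw μ hμ n k).summable) (fun k _ => hasSum_muSym hp3 k) hΔ1 hmom).trans ?_
  have e1 : ((K : ℝ) + 1) * (2 * Δ * (2 * (p : ℝ) ^ K) ^ K) ≤ 6 * Real.exp (-x) := by
    have f1 : (K : ℝ) + 1 ≤ Real.exp K := Real.add_one_le_exp _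
    have f2 : (2 * (p : ℝ) ^ K) ^ K ≤ Real.exp (K + K ^ 2 * L) := by
      have g1 : (p : ℝ) ^ K = Real.exp (K * L) := by
        rw [Real.exp_nat_mul, hL, Real.exp_log (by linarith)]
      have g2 : (2 : ℝ) ≤ Real.exp 1 := by
        have := Real.add_one_le_exp (1 : ℝ); linarith
      calc (2 * (p : ℝ) ^ K) ^ K ≤ (Real.exp 1 * Real.exp (K * L)) ^ K := by
            rw [g1]; gcongr
        _ = _ := by rw [← Real.exp_add, ← Real.exp_nat_mul]; congr 1; ring
    calc ((K : ℝ) + 1) * (2 * Δ * (2 * (p : ℝ) ^ K) ^ K)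
        ≤ Real.exp K * (2 * Δ * Real.exp (K + K ^ 2 * L)) := by gcongr
      _ = 6 * Real.exp (K + (K + K ^ 2 * L) + (C * x ^ 58 - b * x ^ 100)) := by
          rw [hΔ, Real.exp_add (K + (K + K ^ 2 * L) : ℝ), Real.exp_add (K : ℝ) (K + K ^ 2 * L)]
          ring
      _ ≤ 6 * Real.exp (-x) := by
          gcongr
          refine le_trans ?_ hdec
          have k1 : (K : ℝ) ≤ x ^ 58 := le_trans (by linarith) (hK2.trans (mono (by norm_num)))
          have k2 : (K : ℝ) ^ 2 * L ≤ x ^ 58 := by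
            have : (K : ℝ) ≤ x ^ 3 := by linarith
            calc (K : ℝ) ^ 2 * L ≤ (x ^ 3) ^ 2 * x := by gcongr
              _ = x ^ 7 := by ring
              _ ≤ x ^ 58 := mono (by norm_num)
          linarith
  have e2 : (2 * ((K : ℝ) + 1) + 3) / 2 ^ K ≤ 10 * Real.exp (-x) := by
    refine (tail_le K).trans ?_
    gcongr
    have : 4 * x ≤ x ^ 2 := by rw [pow_two]; gcongr
    linarith
  linarith

end Final

end SymCorank

theorem sym_corank_tv_distance (α : ℝ) (hα : 0 < α)
    (μ : Measure ℤ) (hμ : IsProbabilityMeasure μ) (hbal : IsBalanced α μ) :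
    ∃ c : ℝ, 0 < c ∧ ∃ K : ℝ, 0 < K ∧ ∃ p₀ : ℕ,
      ∀ (n p : ℕ), p.Prime → p₀ ≤ p → (p : ℝ) ≤ Real.exp ((n : ℝ) ^ c) →
        (1 / 2) * ∑' k : ℕ,
            |((matMeasure μ hμ n)
                {x | n - ((symMatrix n x).map (fun z : ℤ => (z : ZMod p))).rank = k}).toReal
              - muSym p k|
          ≤ K * Real.exp (-(n : ℝ) ^ c) := by
  obtain ⟨x₀, hx₀, p₀, H⟩ := SymCorank.main_bound α hα μ hμ hbal
  refine ⟨((100 : ℕ) : ℝ)⁻¹, by norm_num, 16, by norm_num, p₀ + ⌈Real.exp x₀⌉₊, ?_⟩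
  intro n p hp hpp hpx
  have hlog : Real.log p ≤ (n : ℝ) ^ (((100 : ℕ) : ℝ)⁻¹) := by
    rwa [Real.log_le_iff_le_exp (by exact_mod_cast hp.pos)]
  have hx : x₀ ≤ (n : ℝ) ^ (((100 : ℕ) : ℝ)⁻¹) := by
    rw [← Real.exp_le_exp]
    refine (Nat.le_ceil _).trans (le_trans ?_ hpx)
    exact_mod_cast (by omega : ⌈Real.exp x₀⌉₊ ≤ p)
  have hn : (n : ℝ) = ((n : ℝ) ^ (((100 : ℕ) : ℝ)⁻¹)) ^ 100 :=
    (Real.rpow_inv_natCast_pow (Nat.cast_nonneg n) (by norm_num)).symm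
  have := H n p _ hp (by omega) hx hn hlog
  simp only [SymCorank.corankLaw] at this
  have h0 := Real.exp_pos (-(n : ℝ) ^ (((100 : ℕ) : ℝ)⁻¹))
  linarith
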